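/- arXiv:1310.0838 — 3 statements merged into one kernel-verified Lean document; each statement's English description precedes it below -/
import Mathlib

section
/- Let Γ be a finite simple graph and G a finite group acting on Γ by automorphisms, and let χ_{Γ,G} be the polynomial with χ_{Γ,G}(n) = |Col_n(Γ)/G| for all integers n ≥ 1. Then for all integers n ≥ 1, χ_{Γ,G}(-n) = (-1)^{|V|} · |Σ_{n,+}(Γ)/G|, the number of G-orbits of even weakly compatible pairs of an n-coloring and an acyclic orientation, up to sign. -/
/-- An orientation of a simple graph `Γ`: an assignment of a head vertex to every edge,
which is a vertex of that edge. -/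
def GraphOri {V : Type*} (Γ : SimpleGraph V) : Type _ :=
  {σ : Γ.edgeSet → V // ∀ e : Γ.edgeSet, σ e ∈ (e : Sym2 V)}

/-- The directed adjacency relation induced by an orientation: `u → v` iff `uv` is an
edge with head `v`. -/
def dirAdj {V : Type*} (Γ : SimpleGraph V) (σ : GraphOri Γ) (u v : V) : Prop :=
  ∃ h : Γ.Adj u v, σ.1 ⟨s(u, v), Γ.mem_edgeSet.mpr h⟩ = v

/-- An orientation is acyclic if it has no directed cycles, i.e. no vertex admits a
nonempty directed path back to itself. -/
def oriAcyclic {V : Type*} (Γ : SimpleGraph V) (σ : GraphOri Γ) : Prop :=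
  ∀ v : V, ¬ Relation.TransGen (dirAdj Γ σ) v v

/-- `oriSMulEq Γ hact g σ σ'` says that `σ' = g • σ`, where `(g • σ)(uv) = g • σ(g⁻¹ • uv)`.
In particular `oriSMulEq Γ hact g σ σ` says that `σ` is fixed by `g`. -/
def oriSMulEq {V G : Type*} [Group G] [MulAction G V] (Γ : SimpleGraph V)
    (hact : ∀ (g : G) (u v : V), Γ.Adj u v → Γ.Adj (g • u) (g • v))
    (g : G) (σ σ' : GraphOri Γ) : Prop :=
  ∀ (u v : V) (h : Γ.Adj u v),
    σ'.1 ⟨s(u, v), Γ.mem_edgeSet.mpr h⟩ =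
      g • σ.1 ⟨s(g⁻¹ • u, g⁻¹ • v), Γ.mem_edgeSet.mpr (hact g⁻¹ u v h)⟩

/-- A coloring `c` and an orientation `σ` are weakly compatible if every edge `uv` with
`c(u) < c(v)` is oriented towards `v`. -/
def weakCompat {V : Type*} (Γ : SimpleGraph V) {n : ℕ} (c : V → Fin n)
    (σ : GraphOri Γ) : Prop :=
  ∀ (u v : V) (h : Γ.Adj u v), c u < c v → σ.1 ⟨s(u, v), Γ.mem_edgeSet.mpr h⟩ = v

/- quotient poset relation for Γ^σ_g -/
def quotDirRel {V G : Type*} [Group G] [MulAction G V] (Γ : SimpleGraph V)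
    (g : G) (σ : GraphOri Γ)
    (a b : Quotient (MulAction.orbitRel (Subgroup.zpowers g) V)) : Prop :=
  ∃ u v : V, Quotient.mk (MulAction.orbitRel (Subgroup.zpowers g) V) u = a ∧
    Quotient.mk (MulAction.orbitRel (Subgroup.zpowers g) V) v = b ∧
    Relation.TransGen (dirAdj Γ σ) u v

/-!
Fix `g` and write `H = ⟨g⟩`. A coloring fixed by `g` is a function on the set of `H`-orbits, and
removing its top color class, an `H`-invariant independent set, expresses the number of such proper
`(n + 1)`-colorings through the numbers of proper `n`-colorings of smaller sets of orbits. The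
`g`-fixed weakly compatible pairs satisfy the same recursion read from `n + 1` back to `n`, up to
the signs `(-1) ^ #I` for the set `I` of orbits removed: here `I` runs over the sets of sinks of the
top color, and inclusion-exclusion applies because a nonempty top color class contains a sink. Both
counts are thus values of one function on `ℤ`, which is a polynomial since its differences are. This
is reciprocity for the `g`-fixed objects, with the sign `(-1)` to the number of `H`-orbits on
vertices, which is `(-1) ^ |V| * sgn g`. Averaging over `g`, Burnside's lemma counts orbits of
colorings, and the average of `sgn g` times the number of fixed points counts the even orbits,
because `sgn` sums to zero over every stabilizer on which it is nontrivial.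
-/

open Finset Polynomial

namespace OrbitalChromatic

section SubsetConvolution

theorem exists_polynomial_eval_add_one (P : ℚ[X]) :
    ∃ q : ℚ[X], ∀ x : ℚ, q.eval (x + 1) = q.eval x + P.eval x := by
  induction P using Polynomial.induction_on' with
  | add P₁ P₂ h₁ h₂ =>
    obtain ⟨q₁, hq₁⟩ := h₁
    obtain ⟨q₂, hq₂⟩ := h₂
    exact ⟨q₁ + q₂, fun x => by simp only [eval_add, hq₁, hq₂]; ring⟩
  | monomial k b =>
    refine ⟨C (b / (k + 1)) * Polynomial.bernoulli (k + 1), fun x => ?_⟩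
    have hk : (k : ℚ) + 1 ≠ 0 := by positivity
    simp only [add_comm x 1, eval_mul, eval_C, bernoulli_eval_one_add, eval_monomial,
      Nat.add_sub_cancel]
    push_cast
    field_simp

theorem exists_polynomial_eval_intCast {f : ℤ → ℚ} (P : ℚ[X])
    (hf : ∀ m : ℤ, f (m + 1) = f m + P.eval (m : ℚ)) :
    ∃ q : ℚ[X], ∀ m : ℤ, q.eval (m : ℚ) = f m := by
  obtain ⟨q, hq⟩ := exists_polynomial_eval_add_one P
  refine ⟨q + C (f 0 - q.eval 0), fun m => ?_⟩
  rw [eval_add, eval_C]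
  induction m using Int.induction_on with
  | zero => simp
  | succ i ih =>
    rw [hf, ← ih]
    push_cast
    rw [hq]
    ring
  | pred i ih =>
    have hfi := hf (-i - 1)
    have hqi := hq (-i - 1)
    push_cast at hfi hqi ih ⊢
    rw [sub_add_cancel] at hfi hqi
    linarith

variable {α : Type*} [DecidableEq α]

/- For fixed `S`, the difference `F S (m + 1) - F S m` only involves proper subsets of `S`. -/
theorem exists_polynomial_of_subset_convolution {e : Finset α → ℚ} (he : e ∅ = 1)
    {F : Finset α → ℤ → ℚ}
    (hF : ∀ S m, F S (m + 1) = ∑ I ∈ S.powerset, e I * F (S \ I) m) (S : Finset α) :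
    ∃ q : ℚ[X], ∀ m : ℤ, q.eval (m : ℚ) = F S m := by
  induction S using Finset.strongInduction with
  | H S ih =>
    choose! Q hQ using ih
    refine exists_polynomial_eval_intCast (∑ I ∈ S.powerset.erase ∅, C (e I) * Q (S \ I))
      fun m => ?_
    rw [hF, ← add_sum_erase _ _ (empty_mem_powerset S), he, one_mul, sdiff_empty, eval_finsetSum]
    congr 1
    refine sum_congr rfl fun I hI => ?_
    obtain ⟨hI, hIS⟩ := mem_erase.1 hI
    rw [eval_mul, eval_C,
      hQ _ (sdiff_ssubset (mem_powerset.1 hIS) (nonempty_iff_ne_empty.2 hI))]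

theorem neg_one_pow_card_sdiff {S I : Finset α} (h : I ⊆ S) :
    (-1 : ℚ) ^ #(S \ I) = (-1) ^ #S * (-1) ^ #I := by
  rw [← card_sdiff_add_card_eq_card h, pow_add, mul_assoc, ← mul_pow]
  simp

/- `a` and `b` are glued to one function on `ℤ`, with the values `(-1) ^ #S * b n S` at `-n`. -/
theorem exists_polynomial_reciprocity {e : Finset α → ℚ} (he : e ∅ = 1)
    {a b : ℕ → Finset α → ℚ} (h0 : ∀ S, a 0 S = (-1) ^ #S * b 0 S)
    (ha : ∀ n S, a (n + 1) S = ∑ I ∈ S.powerset, e I * a n (S \ I))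
    (hb : ∀ n S, b n S = ∑ I ∈ S.powerset, (-1) ^ #I * e I * b (n + 1) (S \ I)) (S : Finset α) :
    ∃ q : ℚ[X], ∀ n : ℕ, q.eval (n : ℚ) = a n S ∧ q.eval (-n : ℚ) = (-1) ^ #S * b n S := by
  let F (S : Finset α) : ℤ → ℚ
    | .ofNat n => a n S
    | .negSucc n => (-1) ^ #S * b (n + 1) S
  have hF_neg (S : Finset α) : ∀ n : ℕ, F S (-n) = (-1) ^ #S * b n S
    | 0 => h0 S
    | n + 1 => rfl
  have hF_neg_add_one (S : Finset α) (n : ℕ) :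
      F S (-n) = ∑ I ∈ S.powerset, e I * F (S \ I) (-(n + 1 : ℕ)) := by
    simp only [hF_neg]
    rw [hb, mul_sum]
    refine sum_congr rfl fun I hI => ?_
    rw [neg_one_pow_card_sdiff (mem_powerset.1 hI)]
    ring
  have hF : ∀ (S : Finset α) (m : ℤ), F S (m + 1) = ∑ I ∈ S.powerset, e I * F (S \ I) m
    | S, .ofNat n => ha n S
    | S, .negSucc n => by
      rw [Int.negSucc_eq, ← Nat.cast_add_one, ← hF_neg_add_one]
      congr 1
      push_cast
      ring
  obtain ⟨q, hq⟩ := exists_polynomial_of_subset_convolution he hF S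
  refine ⟨q, fun n => ⟨hq n, ?_⟩⟩
  rw [← hF_neg, ← hq]
  push_cast
  rfl

end SubsetConvolution

section Recolor

variable {α : Type*} [DecidableEq α] {k : ℕ} {I : Finset α} {c : α → ℕ} {a : α}

/-- The coloring obtained from `c` by giving the color `k` to all elements of `I`. -/
def recolor (I : Finset α) (k : ℕ) (c : α → ℕ) : α → ℕ :=
  fun a => if a ∈ I then k else c a

theorem recolor_of_mem (ha : a ∈ I) : recolor I k c a = k := if_pos ha

theorem recolor_of_notMem (ha : a ∉ I) : recolor I k c a = c a := if_neg ha

theorem recolor_recolor (l : ℕ) : recolor I k (recolor I l c) = recolor I k c := by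
  ext a
  by_cases ha : a ∈ I <;> simp only [recolor, ha, if_true, if_false]

theorem recolor_eq_self (hc : ∀ a ∈ I, c a = k) : recolor I k c = c := by
  ext a
  by_cases ha : a ∈ I
  · rw [recolor_of_mem ha, hc a ha]
  · rw [recolor_of_notMem ha]

theorem recolor_zero_apply_ne_zero : recolor I 0 c a ≠ 0 ↔ a ∉ I ∧ c a ≠ 0 := by
  by_cases ha : a ∈ I <;> simp [recolor, ha]

end Recolor

section SupportedColorings

variable {α : Type*} [Fintype α] [DecidableEq α] {n m : ℕ} {S I : Finset α} {c : α → ℕ}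

/-- The colorings of `S ⊆ α` by `1, …, n`; the value `0` marks the elements outside of `S`. -/
def supportedColorings (n : ℕ) (S : Finset α) : Finset (α → ℕ) :=
  Fintype.piFinset fun a => if a ∈ S then Icc 1 n else {0}

theorem mem_supportedColorings :
    c ∈ supportedColorings n S ↔ ∀ a, c a ≤ n ∧ (c a ≠ 0 ↔ a ∈ S) := by
  simp only [supportedColorings, Fintype.mem_piFinset]
  refine forall_congr' fun a => ?_
  split_ifs with ha
  · simp [ha, Nat.one_le_iff_ne_zero, and_comm]
  · simp +contextual [ha]

theorem supportedColorings_zero_of_nonempty (hS : S.Nonempty) : supportedColorings 0 S = ∅ := by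
  obtain ⟨a, ha⟩ := hS
  refine eq_empty_of_forall_notMem fun c hc => ?_
  have hca := mem_supportedColorings.1 hc a
  exact hca.2.2 ha (Nat.le_zero.1 hca.1)

theorem supportedColorings_empty : supportedColorings n (∅ : Finset α) = {0} := by
  ext c
  simp [supportedColorings, funext_iff]

theorem eq_zero_of_mem_supportedColorings_sdiff (hc : c ∈ supportedColorings m (S \ I)) :
    ∀ a ∈ I, c a = 0 := fun a ha => by
  by_contra h
  exact (mem_sdiff.1 ((mem_supportedColorings.1 hc a).2.1 h)).2 ha

theorem recolor_zero_mem_supportedColorings (hc : c ∈ supportedColorings m S)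
    (hn : ∀ a ∉ I, c a ≤ n) : recolor I 0 c ∈ supportedColorings n (S \ I) := by
  rw [mem_supportedColorings] at hc ⊢
  intro a
  by_cases ha : a ∈ I
  · simp [recolor_of_mem, ha]
  · simp [recolor_of_notMem, ha, hn, (hc a).2]

theorem recolor_mem_supportedColorings (hc : c ∈ supportedColorings m (S \ I)) (hI : I ⊆ S)
    (hn : n ≠ 0) (hmn : m ≤ n) : recolor I n c ∈ supportedColorings n S := by
  rw [mem_supportedColorings] at hc ⊢
  intro a
  by_cases ha : a ∈ I
  · simp [recolor_of_mem, ha, hn, hI ha]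
  · simpa [recolor_of_notMem, ha, (hc a).1.trans hmn] using (hc a).2

end SupportedColorings

section IndepSubsets

variable {V α : Type*} {Γ : SimpleGraph V} {π : V → α} {S I : Finset α}

open Classical in
/-- The subsets `I` of `S` such that no edge of `Γ` joins two vertices in fibers over `I`. -/
noncomputable def indepSubsets (Γ : SimpleGraph V) (π : V → α) (S : Finset α) :
    Finset (Finset α) :=
  S.powerset.filter fun I => Γ.IsIndepSet (π ⁻¹' I)

theorem mem_indepSubsets : I ∈ indepSubsets Γ π S ↔ I ⊆ S ∧ Γ.IsIndepSet (π ⁻¹' I) := by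
  simp [indepSubsets]

open Classical in
theorem sum_indepSubsets {R : Type*} [NonAssocSemiring R] (f : Finset α → R) :
    ∑ I ∈ indepSubsets Γ π S, f I =
      ∑ I ∈ S.powerset, (if Γ.IsIndepSet (π ⁻¹' I) then 1 else 0) * f I := by
  simp only [indepSubsets, sum_filter, ite_mul, one_mul, zero_mul]

end IndepSubsets

section FiberColorings

variable {V α : Type*} [Fintype α]

/-- The elements of color `k`. -/
def colorClass (c : α → ℕ) (k : ℕ) : Finset α := {a | c a = k}

theorem mem_colorClass {c : α → ℕ} {k : ℕ} {a : α} : a ∈ colorClass c k ↔ c a = k := by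
  simp [colorClass]

variable [DecidableEq α]

open Classical in
/-- The proper colorings by `1, …, n`, constant on the fibers of `π`, of the subgraph of `Γ`
induced on the union of the fibers over `S`. -/
noncomputable def properFiberColorings (Γ : SimpleGraph V) (π : V → α) (n : ℕ) (S : Finset α) :
    Finset (α → ℕ) :=
  {c ∈ supportedColorings n S | ∀ u v, Γ.Adj u v → c (π u) = c (π v) → c (π u) = 0}

variable {Γ : SimpleGraph V} {π : V → α} {n m k : ℕ} {S I : Finset α} {c : α → ℕ} {a : α}

theorem mem_properFiberColorings : c ∈ properFiberColorings Γ π n S ↔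
    c ∈ supportedColorings n S ∧ ∀ u v, Γ.Adj u v → c (π u) = c (π v) → c (π u) = 0 := by
  simp [properFiberColorings]

theorem colorClass_subset (hc : c ∈ supportedColorings n S) (hk : k ≠ 0) :
    colorClass c k ⊆ S := fun a ha =>
  ((mem_supportedColorings.1 hc a).2).1 ((mem_colorClass.1 ha).trans_ne hk)

theorem le_of_notMem_colorClass_succ (hc : c ∈ supportedColorings (n + 1) S)
    (ha : a ∉ colorClass c (n + 1)) : c a ≤ n :=
  Nat.le_of_lt_succ <| lt_of_le_of_ne (mem_supportedColorings.1 hc a).1 (mt mem_colorClass.2 ha)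

theorem colorClass_recolor_succ (hc : c ∈ supportedColorings n S) :
    colorClass (recolor I (n + 1) c) (n + 1) = I := by
  ext a
  have hle := (mem_supportedColorings.1 hc a).1
  by_cases ha : a ∈ I
  · simp only [mem_colorClass, recolor_of_mem ha, ha]
  · simp only [mem_colorClass, recolor_of_notMem ha, ha, iff_false]
    lia

theorem recolor_zero_mem_properFiberColorings (hc : c ∈ properFiberColorings Γ π (n + 1) S) :
    recolor (colorClass c (n + 1)) 0 c ∈
      properFiberColorings Γ π n (S \ colorClass c (n + 1)) := by
  obtain ⟨hcS, hproper⟩ := mem_properFiberColorings.1 hc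
  refine mem_properFiberColorings.2 ⟨recolor_zero_mem_supportedColorings hcS fun a ha =>
    le_of_notMem_colorClass_succ hcS ha, fun u v huv heq => ?_⟩
  by_contra hu
  obtain ⟨huI, hu0⟩ := recolor_zero_apply_ne_zero.1 hu
  obtain ⟨hvI, -⟩ := recolor_zero_apply_ne_zero.1 (heq ▸ hu)
  rw [recolor_of_notMem huI, recolor_of_notMem hvI] at heq
  exact hu0 (hproper u v huv heq)

theorem recolor_mem_properFiberColorings (hc : c ∈ properFiberColorings Γ π n (S \ I))
    (hIS : I ⊆ S) (hI : Γ.IsIndepSet (π ⁻¹' I)) :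
    recolor I (n + 1) c ∈ properFiberColorings Γ π (n + 1) S := by
  obtain ⟨hcS, hproper⟩ := mem_properFiberColorings.1 hc
  have hne (a) : c a ≠ n + 1 := (Nat.lt_succ_of_le (mem_supportedColorings.1 hcS a).1).ne
  refine mem_properFiberColorings.2
    ⟨recolor_mem_supportedColorings hcS hIS n.succ_ne_zero n.le_succ, fun u v huv heq => ?_⟩
  by_cases hu : π u ∈ I <;> by_cases hv : π v ∈ I
  · exact absurd huv (hI hu hv huv.ne)
  · rw [recolor_of_mem hu, recolor_of_notMem hv] at heq
    exact absurd heq.symm (hne _)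
  · rw [recolor_of_notMem hu, recolor_of_mem hv] at heq
    exact absurd heq (hne _)
  · rw [recolor_of_notMem hu, recolor_of_notMem hv] at heq
    rw [recolor_of_notMem hu, hproper u v huv heq]

theorem isIndepSet_preimage_colorClass (hc : c ∈ properFiberColorings Γ π n S) (hk : k ≠ 0) :
    Γ.IsIndepSet (π ⁻¹' colorClass c k) := fun u hu v hv _ huv => by
  obtain ⟨-, hproper⟩ := mem_properFiberColorings.1 hc
  rw [Set.mem_preimage, mem_coe, mem_colorClass] at hu hv
  exact hk (hu ▸ hproper u v huv (hu.trans hv.symm))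

theorem card_properFiberColorings_succ (n : ℕ) (S : Finset α) :
    #(properFiberColorings Γ π (n + 1) S) =
      ∑ I ∈ indepSubsets Γ π S, #(properFiberColorings Γ π n (S \ I)) := by
  rw [card_eq_sum_card_fiberwise (f := fun c => colorClass c (n + 1)) (t := indepSubsets Γ π S)]
  · refine sum_congr rfl fun I hI => ?_
    obtain ⟨hIS, hI⟩ := mem_indepSubsets.1 hI
    refine card_nbij' (recolor I 0) (recolor I (n + 1)) ?_ ?_ ?_ ?_
    · intro c hc
      obtain ⟨hproper, rfl⟩ := mem_filter.1 hc
      exact recolor_zero_mem_properFiberColorings hproper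
    · exact fun c hc => mem_filter.2 ⟨recolor_mem_properFiberColorings hc hIS hI,
        colorClass_recolor_succ (mem_properFiberColorings.1 hc).1⟩
    · intro c hc
      obtain ⟨-, rfl⟩ := mem_filter.1 hc
      rw [recolor_recolor, recolor_eq_self fun a => mem_colorClass.1]
    · intro c hc
      rw [recolor_recolor, recolor_eq_self
        (eq_zero_of_mem_supportedColorings_sdiff (mem_properFiberColorings.1 hc).1)]
  · exact fun c hc => mem_indepSubsets.2
      ⟨colorClass_subset (mem_properFiberColorings.1 hc).1 n.succ_ne_zero,
        isIndepSet_preimage_colorClass hc n.succ_ne_zero⟩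

end FiberColorings

theorem transGen_and_not_of_sinks {V : Type*} {r : V → V → Prop} {p : V → Prop}
    (hp : ∀ u v, r u v → ¬p u) {u v : V} (h : Relation.TransGen r u v) (hv : ¬p v) :
    Relation.TransGen (fun u v => r u v ∧ ¬p v) u v := by
  induction h with
  | single h => exact .single ⟨h, hv⟩
  | tail _ h ih => exact .tail (ih (hp _ _ h)) ⟨h, hv⟩

theorem exists_sink_of_transGen_irrefl {V : Type*} [Finite V] {r : V → V → Prop}
    (hr : ∀ v, ¬Relation.TransGen r v v) (u : V) :
    ∃ v, Relation.ReflTransGen r u v ∧ ∀ w, ¬r v w := by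
  have : Std.Irrefl (Relation.TransGen r) := ⟨hr⟩
  obtain ⟨v, huv, hv⟩ := (Finite.wellFounded_of_trans_of_irrefl
    (Function.swap (Relation.TransGen r))).has_min {v | Relation.ReflTransGen r u v} ⟨u, .refl⟩
  exact ⟨v, huv, fun w hvw => hv w (huv.tail hvw) (.single hvw)⟩

section GraphAction

variable {V G : Type*} [Group G] [MulAction G V]

/-- The group `G` acts on the graph `Γ` by automorphisms. -/
class ActsOnGraph (G : Type*) {V : Type*} [Group G] [MulAction G V] (Γ : SimpleGraph V) :
    Prop where
  smul_adj : ∀ (g : G) (u v : V), Γ.Adj u v → Γ.Adj (g • u) (g • v)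

variable {Γ : SimpleGraph V} [ActsOnGraph G Γ]

theorem smul_adj_smul_iff (g : G) {u v : V} : Γ.Adj (g • u) (g • v) ↔ Γ.Adj u v :=
  ⟨fun h => by simpa using ActsOnGraph.smul_adj g⁻¹ _ _ h, ActsOnGraph.smul_adj g u v⟩

instance (H : Subgroup G) : ActsOnGraph H Γ :=
  ⟨fun h => ActsOnGraph.smul_adj (h : G)⟩

end GraphAction

section CompatiblePairs

variable {V α : Type*}

/-- `r` is an `H`-invariant acyclic orientation, weakly compatible with `c ∘ π`, of the subgraph
of `Γ` induced on the vertices of nonzero color; `r u v` means that `uv` is an edge with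
head `v`. -/
structure IsCompatiblePair (Γ : SimpleGraph V) (π : V → α) (H : Type*) [Group H] [MulAction H V]
    (c : α → ℕ) (r : V → V → Prop) : Prop where
  adj_iff : ∀ u v, r u v ∨ r v u ↔ Γ.Adj u v ∧ c (π u) ≠ 0 ∧ c (π v) ≠ 0
  acyclic : ∀ v, ¬Relation.TransGen r v v
  monotone : ∀ u v, r u v → c (π u) ≤ c (π v)
  smul_iff : ∀ (h : H) u v, r (h • u) (h • v) ↔ r u v

/-- The restriction of a pair to the fibers outside of `I`. -/
def deleteSinks [DecidableEq α] (π : V → α) (I : Finset α) (x : (α → ℕ) × (V → V → Prop)) :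
    (α → ℕ) × (V → V → Prop) :=
  (recolor I 0 x.1, fun u v => x.2 u v ∧ π v ∉ I)

/-- The extension of a pair to the fibers over `I`, which receive the color `k` and become
sinks. -/
def addSinks [DecidableEq α] (Γ : SimpleGraph V) (π : V → α) (k : ℕ) (I : Finset α)
    (x : (α → ℕ) × (V → V → Prop)) : (α → ℕ) × (V → V → Prop) :=
  (recolor I k x.1, fun u v => x.2 u v ∨ π v ∈ I ∧ x.1 (π u) ≠ 0 ∧ Γ.Adj u v)

open Classical in
/-- The fibers of color `k` without outgoing edges. -/
noncomputable def topSinks [Fintype α] (π : V → α) (k : ℕ) (x : (α → ℕ) × (V → V → Prop)) :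
    Finset α :=
  {a | x.1 a = k ∧ ∀ v w, x.2 v w → π v ≠ a}

variable {Γ : SimpleGraph V} {π : V → α} {H : Type*} [Group H] [MulAction H V] {n k : ℕ}
  {S I : Finset α} {c : α → ℕ} {r : V → V → Prop} {x : (α → ℕ) × (V → V → Prop)}

theorem mem_topSinks [Fintype α] {a : α} :
    a ∈ topSinks π k x ↔ x.1 a = k ∧ ∀ v w, x.2 v w → π v ≠ a := by
  simp [topSinks]

theorem IsCompatiblePair.of_rel (hx : IsCompatiblePair Γ π H c r) {u v : V} (huv : r u v) :
    Γ.Adj u v ∧ c (π u) ≠ 0 ∧ c (π v) ≠ 0 :=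
  (hx.adj_iff u v).1 (.inl huv)

theorem isCompatiblePair_zero_iff {r : V → V → Prop} :
    IsCompatiblePair Γ π H 0 r ↔ r = fun _ _ => False := by
  refine ⟨fun hr => ?_, ?_⟩
  · ext u v
    exact iff_false_intro fun huv => (hr.of_rel huv).2.1 rfl
  · rintro rfl
    exact ⟨by simp, fun v hv => by obtain ⟨w, hw, -⟩ := Relation.TransGen.head'_iff.1 hv; exact hw,
      by simp, by simp⟩

theorem isIndepSet_preimage_topSinks [Fintype α] (hx : IsCompatiblePair Γ π H x.1 x.2)
    (hk : k ≠ 0) : Γ.IsIndepSet (π ⁻¹' topSinks π k x) := fun u hu v hv _ huv => by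
  obtain ⟨hu, hu_sink⟩ := mem_topSinks.1 hu
  obtain ⟨hv, hv_sink⟩ := mem_topSinks.1 hv
  rcases (hx.adj_iff u v).2 ⟨huv, hu.trans_ne hk, hv.trans_ne hk⟩ with h | h
  exacts [hu_sink _ _ h rfl, hv_sink _ _ h rfl]

theorem topSinks_nonempty [Finite V] [Fintype α] (hx : IsCompatiblePair Γ π H x.1 x.2)
    (hπ : ∀ u v, π u = π v ↔ ∃ h : H, h • u = v) (hle : ∀ a, x.1 a ≤ k) {a : α}
    (ha : x.1 a = k) :
    (topSinks π k x).Nonempty := by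
  by_cases hfib : ∃ u, π u = a
  · obtain ⟨u, rfl⟩ := hfib
    obtain ⟨v, huv, hv⟩ := exists_sink_of_transGen_irrefl hx.acyclic u
    have hmono : x.1 (π u) ≤ x.1 (π v) :=
      Relation.reflTransGen_le_of_le (r := (x.1 ∘ π) ⁻¹'o (· ≤ ·)) hx.monotone _ _ huv
    refine ⟨π v, mem_topSinks.2 ⟨(hle _).antisymm (ha ▸ hmono), fun w w' hw heq => ?_⟩⟩
    obtain ⟨h, rfl⟩ := (hπ w v).1 heq
    exact hv _ ((hx.smul_iff h w w').2 hw)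
  · exact ⟨a, mem_topSinks.2 ⟨ha, fun v _ _ hva => hfib ⟨v, hva⟩⟩⟩

variable [DecidableEq α]

theorem isCompatiblePair_deleteSinks (hx : IsCompatiblePair Γ π H x.1 x.2)
    (hπ : ∀ (h : H) v, π (h • v) = π v) (hI : ∀ v w, x.2 v w → π v ∉ I) :
    IsCompatiblePair Γ π H (deleteSinks π I x).1 (deleteSinks π I x).2 where
  adj_iff u v := by
    simp only [deleteSinks, recolor_zero_apply_ne_zero]
    have := hx.adj_iff u v
    have := hI u v
    have := hI v u
    grind
  acyclic v h := hx.acyclic v (Relation.TransGen.mono (fun _ _ => And.left) _ _ h)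
  monotone u v huv := by
    simp only [deleteSinks]
    rw [recolor_of_notMem (hI u v huv.1), recolor_of_notMem huv.2]
    exact hx.monotone u v huv.1
  smul_iff h u v := and_congr (hx.smul_iff h u v) (by rw [hπ])

theorem isCompatiblePair_addSinks [ActsOnGraph H Γ] (hx : IsCompatiblePair Γ π H x.1 x.2)
    (hπ : ∀ (h : H) v, π (h • v) = π v)
    (hI : Γ.IsIndepSet (π ⁻¹' I))
    (hI0 : ∀ a ∈ I, x.1 a = 0) (hk : k ≠ 0) (hle : ∀ a, x.1 a ≤ k) :
    IsCompatiblePair Γ π H (addSinks Γ π k I x).1 (addSinks Γ π k I x).2 where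
  adj_iff u v := by
    have hne (a) : recolor I k x.1 a ≠ 0 ↔ a ∈ I ∨ x.1 a ≠ 0 := by
      by_cases ha : a ∈ I <;> simp [recolor, ha, hk]
    simp only [addSinks, hne]
    have := hx.adj_iff u v
    have := hI0 (π u)
    have := hI0 (π v)
    have : π u ∈ I → π v ∈ I → ¬Γ.Adj u v := fun hu hv huv => hI hu hv huv.ne huv
    have := Γ.adj_comm u v
    grind
  acyclic v h := by
    have hsink (u w) (huw : (addSinks Γ π k I x).2 u w) : π u ∉ I := fun hu =>
      huw.elim (fun hr => (hx.of_rel hr).2.1 (hI0 _ hu)) fun hr => hr.2.1 (hI0 _ hu)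
    obtain ⟨w, hvw, -⟩ := Relation.TransGen.head'_iff.1 h
    exact hx.acyclic v <| Relation.TransGen.mono
      (fun _ _ huw => huw.1.resolve_right fun hr => huw.2 hr.1) _ _
      (transGen_and_not_of_sinks hsink h (hsink v w hvw))
  monotone u v huv := by
    simp only [addSinks]
    by_cases hv : π v ∈ I
    · rw [recolor_of_mem hv]
      by_cases hu : π u ∈ I
      · rw [recolor_of_mem hu]
      · rw [recolor_of_notMem hu]
        exact hle _
    · have hr := huv.resolve_right fun hr => hv hr.1
      rw [recolor_of_notMem hv, recolor_of_notMem fun hu => (hx.of_rel hr).2.1 (hI0 _ hu)]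
      exact hx.monotone u v hr
  smul_iff h u v := by
    simp only [addSinks, hx.smul_iff, hπ, smul_adj_smul_iff]

theorem addSinks_deleteSinks (hx : IsCompatiblePair Γ π H x.1 x.2)
    (hI : ∀ v w, x.2 v w → π v ∉ I) (hIk : ∀ a ∈ I, x.1 a = k) (hk : k ≠ 0) :
    addSinks Γ π k I (deleteSinks π I x) = x := by
  refine Prod.ext ((recolor_recolor 0).trans (recolor_eq_self hIk)) ?_
  ext u v
  simp only [addSinks, deleteSinks, recolor_zero_apply_ne_zero]
  have hv0 (hv : π v ∈ I) : x.1 (π v) ≠ 0 := (hIk _ hv).trans_ne hk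
  have := hx.adj_iff u v
  have := hI u v
  have := hI v u
  grind

theorem deleteSinks_addSinks (hx : IsCompatiblePair Γ π H x.1 x.2) (hI0 : ∀ a ∈ I, x.1 a = 0) :
    deleteSinks π I (addSinks Γ π k I x) = x := by
  refine Prod.ext ((recolor_recolor k).trans (recolor_eq_self hI0)) ?_
  ext u v
  simp only [addSinks, deleteSinks]
  have hv (huv : x.2 u v) : π v ∉ I := fun hv => (hx.of_rel huv).2.2 (hI0 _ hv)
  grind

theorem subset_topSinks_addSinks [Fintype α] (hx : IsCompatiblePair Γ π H x.1 x.2)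
    (hI0 : ∀ a ∈ I, x.1 a = 0) : I ⊆ topSinks π k (addSinks Γ π k I x) := by
  refine fun a ha => mem_topSinks.2 ⟨recolor_of_mem ha, ?_⟩
  rintro v w (hr | hr) rfl
  · exact (hx.of_rel hr).2.1 (hI0 _ ha)
  · exact hr.2.1 (hI0 _ ha)

end CompatiblePairs

section FiberPairs

variable {V α : Type*} [Fintype V] [Fintype α] [DecidableEq α]

open Classical in
/-- The weakly compatible pairs on the subgraph induced on the union of the fibers over `S`: the
colors are `1, …, n`, and both components are `H`-invariant. -/
noncomputable def fiberPairs (Γ : SimpleGraph V) (π : V → α) (H : Type*) [Group H] [MulAction H V]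
    (n : ℕ) (S : Finset α) : Finset ((α → ℕ) × (V → V → Prop)) :=
  {x ∈ supportedColorings n S ×ˢ univ | IsCompatiblePair Γ π H x.1 x.2}

variable {Γ : SimpleGraph V} {π : V → α} {H : Type*} [Group H] [MulAction H V] {n k : ℕ}
  {S I : Finset α} {x : (α → ℕ) × (V → V → Prop)}

theorem mem_fiberPairs : x ∈ fiberPairs Γ π H n S ↔
    x.1 ∈ supportedColorings n S ∧ IsCompatiblePair Γ π H x.1 x.2 := by
  simp [fiberPairs]

theorem topSinks_subset (hx : x ∈ fiberPairs Γ π H n S) (hk : k ≠ 0) : topSinks π k x ⊆ S :=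
  fun a ha => ((mem_supportedColorings.1 (mem_fiberPairs.1 hx).1 a).2).1
    ((mem_topSinks.1 ha).1.trans_ne hk)

theorem mem_fiberPairs_iff_topSinks_eq_empty (hπ : ∀ u v, π u = π v ↔ ∃ h : H, h • u = v) :
    x ∈ fiberPairs Γ π H n S ↔
      x ∈ fiberPairs Γ π H (n + 1) S ∧ topSinks π (n + 1) x = ∅ := by
  simp only [mem_fiberPairs, mem_supportedColorings, ← not_nonempty_iff_eq_empty]
  refine ⟨fun ⟨hc, hx⟩ => ⟨⟨fun a => ⟨(hc a).1.trans n.le_succ, (hc a).2⟩, hx⟩, ?_⟩,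
    fun ⟨⟨hc, hx⟩, htop⟩ => ⟨fun a => ⟨?_, (hc a).2⟩, hx⟩⟩
  · rintro ⟨a, ha⟩
    exact absurd ((mem_topSinks.1 ha).1.symm.trans_le (hc a).1) n.lt_irrefl
  · exact Nat.le_of_lt_succ <| lt_of_le_of_ne (hc a).1 fun ha =>
      htop (topSinks_nonempty hx hπ (fun a => (hc a).1) ha)

theorem card_filter_subset_topSinks [ActsOnGraph H Γ]
    (hπ : ∀ u v, π u = π v ↔ ∃ h : H, h • u = v)
    (hI : I ∈ indepSubsets Γ π S) :
    #{x ∈ fiberPairs Γ π H (n + 1) S | I ⊆ topSinks π (n + 1) x} =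
      #(fiberPairs Γ π H (n + 1) (S \ I)) := by
  obtain ⟨hIS, hI⟩ := mem_indepSubsets.1 hI
  have hπ_smul (h : H) (v : V) : π (h • v) = π v := ((hπ _ _).2 ⟨h, rfl⟩).symm
  have hsink (x) (hx : I ⊆ topSinks π (n + 1) x) (v w) (hvw : x.2 v w) : π v ∉ I := fun hv =>
    (mem_topSinks.1 (hx hv)).2 v w hvw rfl
  refine card_nbij' (deleteSinks π I) (addSinks Γ π (n + 1) I) ?_ ?_ ?_ ?_ <;> intro x hx
  · obtain ⟨hx, hIx⟩ := mem_filter.1 hx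
    obtain ⟨hc, hx⟩ := mem_fiberPairs.1 hx
    exact mem_fiberPairs.2 ⟨recolor_zero_mem_supportedColorings hc fun a _ =>
      (mem_supportedColorings.1 hc a).1, isCompatiblePair_deleteSinks hx hπ_smul (hsink x hIx)⟩
  · obtain ⟨hc, hx⟩ := mem_fiberPairs.1 hx
    have hI0 := eq_zero_of_mem_supportedColorings_sdiff hc
    exact mem_filter.2 ⟨mem_fiberPairs.2
      ⟨recolor_mem_supportedColorings hc hIS n.succ_ne_zero le_rfl,
        isCompatiblePair_addSinks hx hπ_smul hI hI0 n.succ_ne_zero fun a =>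
          (mem_supportedColorings.1 hc a).1⟩, subset_topSinks_addSinks hx hI0⟩
  · obtain ⟨hx, hIx⟩ := mem_filter.1 hx
    exact addSinks_deleteSinks (mem_fiberPairs.1 hx).2 (hsink x hIx)
      (fun a ha => (mem_topSinks.1 (hIx ha)).1) n.succ_ne_zero
  · obtain ⟨hc, hx⟩ := mem_fiberPairs.1 hx
    exact deleteSinks_addSinks hx (eq_zero_of_mem_supportedColorings_sdiff hc)

/- Inclusion–exclusion over the sets `I` of top sinks of pairs with colors `1, …, n + 1`. -/
theorem card_fiberPairs_eq_sum [ActsOnGraph H Γ] (hπ : ∀ u v, π u = π v ↔ ∃ h : H, h • u = v)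
    (n : ℕ) (S : Finset α) :
    (#(fiberPairs Γ π H n S) : ℤ) =
      ∑ I ∈ indepSubsets Γ π S, (-1 : ℤ) ^ #I * #(fiberPairs Γ π H (n + 1) (S \ I)) := by
  have hfilter : fiberPairs Γ π H n S =
      {x ∈ fiberPairs Γ π H (n + 1) S | topSinks π (n + 1) x = ∅} := by
    ext x
    rw [mem_filter, mem_fiberPairs_iff_topSinks_eq_empty hπ]
  calc (#(fiberPairs Γ π H n S) : ℤ)
    _ = ∑ x ∈ fiberPairs Γ π H (n + 1) S, ∑ I ∈ (topSinks π (n + 1) x).powerset, (-1 : ℤ) ^ #I := by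
      simp only [hfilter, sum_powerset_neg_one_pow_card, sum_boole]
    _ = ∑ I ∈ indepSubsets Γ π S,
          ∑ x ∈ fiberPairs Γ π H (n + 1) S with I ⊆ topSinks π (n + 1) x, (-1 : ℤ) ^ #I := by
      refine sum_comm' fun x I => ?_
      rw [mem_powerset, mem_filter, mem_indepSubsets]
      refine ⟨fun ⟨hx, hI⟩ => ⟨⟨hx, hI⟩, hI.trans (topSinks_subset hx n.succ_ne_zero), ?_⟩,
        fun ⟨hx, _⟩ => hx⟩
      exact (isIndepSet_preimage_topSinks (mem_fiberPairs.1 hx).2 n.succ_ne_zero).mono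
        (Set.preimage_mono (coe_subset.2 hI))
    _ = ∑ I ∈ indepSubsets Γ π S, (-1 : ℤ) ^ #I * #(fiberPairs Γ π H (n + 1) (S \ I)) :=
      sum_congr rfl fun I hI => by
        rw [sum_const, card_filter_subset_topSinks hπ hI, nsmul_eq_mul, mul_comm]

end FiberPairs

section FiberReciprocity

variable {V α : Type*} [Fintype α] [DecidableEq α] {Γ : SimpleGraph V} {π : V → α}
  {H : Type*} [Group H] [MulAction H V]

theorem card_properFiberColorings_empty (n : ℕ) :
    #(properFiberColorings Γ π n (∅ : Finset α)) = 1 := by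
  simp [properFiberColorings, supportedColorings_empty, filter_singleton]

variable [Fintype V]

theorem card_fiberPairs_empty (n : ℕ) : #(fiberPairs Γ π H n (∅ : Finset α)) = 1 := by
  refine card_eq_one.2 ⟨(0, fun _ _ => False), ?_⟩
  ext ⟨c, r⟩
  simp only [mem_fiberPairs, supportedColorings_empty, mem_singleton, Prod.mk.injEq]
  refine and_congr_right ?_
  rintro rfl
  exact isCompatiblePair_zero_iff

theorem card_properFiberColorings_zero (S : Finset α) :
    (#(properFiberColorings Γ π 0 S) : ℚ) = (-1) ^ #S * #(fiberPairs Γ π H 0 S) := by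
  obtain rfl | hS := S.eq_empty_or_nonempty
  · simp [card_properFiberColorings_empty, card_fiberPairs_empty]
  · simp [properFiberColorings, fiberPairs, supportedColorings_zero_of_nonempty hS]

theorem exists_polynomial_fiber_reciprocity [ActsOnGraph H Γ]
    (hπ : ∀ u v, π u = π v ↔ ∃ h : H, h • u = v)
    (S : Finset α) :
    ∃ q : ℚ[X], ∀ n : ℕ, q.eval (n : ℚ) = #(properFiberColorings Γ π n S) ∧
      q.eval (-n : ℚ) = (-1) ^ #S * #(fiberPairs Γ π H n S) := by
  classical
  refine exists_polynomial_reciprocity (e := fun I => if Γ.IsIndepSet (π ⁻¹' I) then 1 else 0)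
    (a := fun n S => #(properFiberColorings Γ π n S)) (b := fun n S => #(fiberPairs Γ π H n S))
    (by simp) card_properFiberColorings_zero (fun n S => ?_) (fun n S => ?_) S
  · rw [← sum_indepSubsets, card_properFiberColorings_succ, Nat.cast_sum]
  · simp only [mul_comm _ (ite _ _ _), mul_assoc]
    rw [← sum_indepSubsets]
    exact_mod_cast card_fiberPairs_eq_sum hπ n S

end FiberReciprocity

section Orientations

variable {V : Type*} {Γ : SimpleGraph V} {σ τ : GraphOri Γ} {u v : V}

theorem graphOri_apply_swap (σ : GraphOri Γ) (h : Γ.Adj u v) :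
    σ.1 ⟨s(u, v), Γ.mem_edgeSet.mpr h⟩ = σ.1 ⟨s(v, u), Γ.mem_edgeSet.mpr h.symm⟩ :=
  congrArg σ.1 (Subtype.ext Sym2.eq_swap)

theorem dirAdj_or_dirAdj_iff : dirAdj Γ σ u v ∨ dirAdj Γ σ v u ↔ Γ.Adj u v := by
  refine ⟨fun h => h.elim (fun h => h.1) fun h => h.1.symm, fun h => ?_⟩
  rcases Sym2.mem_iff.1 (σ.2 ⟨s(u, v), Γ.mem_edgeSet.mpr h⟩) with hu | hv
  · exact .inr ⟨h.symm, (graphOri_apply_swap σ h).symm.trans hu⟩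
  · exact .inl ⟨h, hv⟩

theorem dirAdj_asymm (h : dirAdj Γ σ u v) : ¬dirAdj Γ σ v u := fun h' =>
  h.1.ne (h'.2.symm.trans ((graphOri_apply_swap σ h.1).symm.trans h.2))

theorem dirAdj_injective : Function.Injective (dirAdj Γ) := fun σ τ h => by
  refine Subtype.ext (funext ?_)
  rintro ⟨e, he⟩
  induction e using Sym2.ind with | _ u v =>
  have heq {u v : V} (huv : dirAdj Γ σ u v) :
      σ.1 ⟨s(u, v), Γ.mem_edgeSet.mpr huv.1⟩ = τ.1 ⟨s(u, v), Γ.mem_edgeSet.mpr huv.1⟩ := by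
    have huv' : dirAdj Γ τ u v := h ▸ huv
    exact huv.2.trans huv'.2.symm
  rcases dirAdj_or_dirAdj_iff.2 (Γ.mem_edgeSet.1 he) with huv | huv
  · exact heq huv
  · rw [graphOri_apply_swap σ he, graphOri_apply_swap τ he, heq huv]

theorem exists_dirAdj_eq {r : V → V → Prop} (hadj : ∀ u v, r u v ∨ r v u ↔ Γ.Adj u v)
    (hasymm : ∀ u v, r u v → ¬r v u) : ∃ σ : GraphOri Γ, dirAdj Γ σ = r := by
  have hhead (e : Γ.edgeSet) : ∃ v u, (e : Sym2 V) = s(u, v) ∧ r u v := by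
    obtain ⟨e, he⟩ := e
    induction e using Sym2.ind with | _ u v =>
    rcases (hadj u v).2 he with h | h
    exacts [⟨v, u, rfl, h⟩, ⟨u, v, Sym2.eq_swap, h⟩]
  choose head tail hedge hr using hhead
  refine ⟨⟨head, fun e => hedge e ▸ Sym2.mem_mk_right _ _⟩, ?_⟩
  ext u v
  constructor
  · rintro ⟨h, hv : head _ = v⟩
    have hedge := hedge ⟨s(u, v), Γ.mem_edgeSet.mpr h⟩
    have hr := hr ⟨s(u, v), Γ.mem_edgeSet.mpr h⟩
    rw [hv] at hedge hr
    rwa [Sym2.congr_left.1 hedge]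
  · intro h
    have huv : Γ.Adj u v := (hadj u v).1 (.inl h)
    refine ⟨huv, ?_⟩
    rcases Sym2.eq_iff.1 (hedge ⟨s(u, v), Γ.mem_edgeSet.mpr huv⟩) with ⟨-, hv⟩ | ⟨hu, hv⟩
    · exact hv.symm
    · have hvu := hr ⟨s(u, v), Γ.mem_edgeSet.mpr huv⟩
      rw [← hu, ← hv] at hvu
      exact absurd hvu (hasymm u v h)

end Orientations

section Transfer

variable {V α : Type*} {Γ : SimpleGraph V} {n : ℕ}

/-- The proper colorings of `Γ` with `n` colors. -/
def properColorings (Γ : SimpleGraph V) (n : ℕ) : Set (V → Fin n) :=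
  {c | ∀ u v, Γ.Adj u v → c u ≠ c v}

/-- The weakly compatible pairs of an `n`-coloring and an acyclic orientation of `Γ`. -/
def compatiblePairs (Γ : SimpleGraph V) (n : ℕ) : Set ((V → Fin n) × GraphOri Γ) :=
  {x | oriAcyclic Γ x.2 ∧ weakCompat Γ x.1 x.2}

theorem weakCompat_iff {c : V → Fin n} {σ : GraphOri Γ} :
    weakCompat Γ c σ ↔ ∀ u v, dirAdj Γ σ u v → c u ≤ c v := by
  refine ⟨fun h u v huv => ?_, fun h u v huv hlt => ?_⟩
  · by_contra! hlt
    exact dirAdj_asymm huv ⟨huv.1.symm, h v u huv.1.symm hlt⟩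
  · rcases dirAdj_or_dirAdj_iff.2 huv with hdir | hdir
    · exact hdir.2
    · exact absurd (h v u hdir) hlt.not_ge

/-- The proper colorings that are constant on the orbits of `H`. -/
def invariantColorings (Γ : SimpleGraph V) (H : Type*) [SMul H V] (n : ℕ) : Set (V → Fin n) :=
  {c ∈ properColorings Γ n | ∀ (h : H) v, c (h • v) = c v}

/-- The weakly compatible pairs whose two components are both invariant under `H`. -/
def invariantPairs (Γ : SimpleGraph V) (H : Type*) [SMul H V] (n : ℕ) :
    Set ((V → Fin n) × GraphOri Γ) :=
  {x ∈ compatiblePairs Γ n | (∀ (h : H) v, x.1 (h • v) = x.1 v) ∧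
    ∀ (h : H) u v, dirAdj Γ x.2 (h • u) (h • v) ↔ dirAdj Γ x.2 u v}

/-- The shift from the colors `0, …, n - 1` to `1, …, n`. -/
def succColoring (d : α → Fin n) : α → ℕ := fun a => d a + 1

theorem succColoring_injective : Function.Injective (succColoring (α := α) (n := n)) :=
  fun _ _ h => funext fun a => Fin.ext (Nat.succ_injective (congrFun h a))

theorem exists_succColoring_eq [Fintype α] [DecidableEq α] {c : α → ℕ}
    (hc : c ∈ supportedColorings n univ) : ∃ d : α → Fin n, succColoring d = c := by
  have hc (a) : 0 < c a ∧ c a ≤ n := by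
    have := mem_supportedColorings.1 hc a
    simpa [Nat.pos_iff_ne_zero, and_comm] using this
  exact ⟨fun a => ⟨c a - 1, by have := hc a; lia⟩, funext fun a => Nat.sub_add_cancel (hc a).1⟩

theorem succColoring_mem_supportedColorings [Fintype α] [DecidableEq α] (d : α → Fin n) :
    succColoring d ∈ supportedColorings n univ :=
  mem_supportedColorings.2 fun a => ⟨(d a).2, by simp [succColoring]⟩

theorem isCompatiblePair_succColoring_iff {π : V → α} {H : Type*} [Group H] [MulAction H V]
    {d : α → Fin n} {σ : GraphOri Γ} :
    IsCompatiblePair Γ π H (succColoring d) (dirAdj Γ σ) ↔ (d ∘ π, σ) ∈ compatiblePairs Γ n ∧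
      ∀ (h : H) u v, dirAdj Γ σ (h • u) (h • v) ↔ dirAdj Γ σ u v := by
  rw [compatiblePairs, Set.mem_ofPred_eq, weakCompat_iff, and_assoc]
  refine ⟨fun hx => ⟨hx.acyclic, fun u v huv => ?_, hx.smul_iff⟩, fun ⟨hacyc, hmono, hsmul⟩ =>
    ⟨fun u v => ?_, hacyc, fun u v huv => Nat.succ_le_succ (hmono u v huv), hsmul⟩⟩
  · exact Nat.le_of_succ_le_succ (hx.monotone u v huv)
  · simp [dirAdj_or_dirAdj_iff, succColoring]

variable {π : V → α} {H : Type*} [Group H] [MulAction H V]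

theorem exists_comp_eq_of_smul_eq {β : Type*} (hsurj : Function.Surjective π)
    (hπ : ∀ u v, π u = π v ↔ ∃ h : H, h • u = v) {c : V → β}
    (hc : ∀ (h : H) v, c (h • v) = c v) : ∃ d : α → β, d ∘ π = c := by
  refine ⟨c ∘ Function.surjInv hsurj, funext fun v => ?_⟩
  obtain ⟨h, hv⟩ := (hπ _ v).1 (Function.surjInv_eq hsurj (π v))
  exact (hc h _).symm.trans (congrArg c hv)

theorem card_properFiberColorings_univ [Fintype α] [DecidableEq α]
    (hsurj : Function.Surjective π) (hπ : ∀ u v, π u = π v ↔ ∃ h : H, h • u = v) :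
    #(properFiberColorings Γ π n univ) = (invariantColorings Γ H n).ncard := by
  rw [← Set.ncard_coe_finset, ← Set.ncard_preimage_of_injective_subset_range
    succColoring_injective, ← Set.ncard_preimage_of_injective_subset_range
    (hsurj.injective_comp_right (γ := Fin n))]
  · congr 1
    ext d
    have hinv (h : H) (v : V) : d (π (h • v)) = d (π v) :=
      congrArg d ((hπ _ _).2 ⟨h, rfl⟩).symm
    simp [mem_properFiberColorings, invariantColorings,
      succColoring_mem_supportedColorings, properColorings, hinv,
      succColoring, Fin.val_inj]
  · exact fun c hc => exists_comp_eq_of_smul_eq hsurj hπ hc.2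
  · exact fun c hc => exists_succColoring_eq (mem_properFiberColorings.1 hc).1

theorem card_fiberPairs_univ [Fintype V] [Fintype α] [DecidableEq α]
    (hsurj : Function.Surjective π) (hπ : ∀ u v, π u = π v ↔ ∃ h : H, h • u = v) :
    #(fiberPairs Γ π H n univ) = (invariantPairs Γ H n).ncard := by
  rw [← Set.ncard_coe_finset, ← Set.ncard_preimage_of_injective_subset_range
    (succColoring_injective.prodMap (dirAdj_injective (Γ := Γ))),
    ← Set.ncard_preimage_of_injective_subset_range
    ((hsurj.injective_comp_right (γ := Fin n)).prodMap Function.injective_id)]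
  · congr 1
    ext ⟨d, σ⟩
    have hinv (h : H) (v : V) : d (π (h • v)) = d (π v) :=
      congrArg d ((hπ _ _).2 ⟨h, rfl⟩).symm
    simp [mem_fiberPairs, invariantPairs,
      succColoring_mem_supportedColorings, isCompatiblePair_succColoring_iff,
      hinv]
  · rintro ⟨c, σ⟩ ⟨-, hc, -⟩
    obtain ⟨d, rfl⟩ := exists_comp_eq_of_smul_eq hsurj hπ hc
    exact ⟨(d, σ), rfl⟩
  · rintro ⟨c, r⟩ hx
    obtain ⟨hc, hx⟩ := mem_fiberPairs.1 hx
    obtain ⟨d, rfl⟩ := exists_succColoring_eq hc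
    obtain ⟨σ, rfl⟩ := exists_dirAdj_eq (Γ := Γ) (r := r)
      (fun u v => by simp [hx.adj_iff, succColoring])
      fun u v huv hvu => hx.acyclic u (.tail (.single huv) hvu)
    exact ⟨(d, σ), rfl⟩

theorem exists_polynomial_invariant_reciprocity [Finite V] (Γ : SimpleGraph V) (H : Type*)
    [Group H] [MulAction H V] [ActsOnGraph H Γ] :
    ∃ q : ℚ[X], ∀ n : ℕ,
      q.eval (n : ℚ) = (invariantColorings Γ H n).ncard ∧
      q.eval (-n : ℚ) =
        (-1) ^ Nat.card (MulAction.orbitRel.Quotient H V) * (invariantPairs Γ H n).ncard := by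
  classical
  have := Fintype.ofFinite V
  have := Fintype.ofFinite (MulAction.orbitRel.Quotient H V)
  let π : V → MulAction.orbitRel.Quotient H V := Quotient.mk _
  have hsurj : Function.Surjective π := Quotient.mk_surjective
  have hπ (u v) : π u = π v ↔ ∃ h : H, h • u = v := by
    rw [eq_comm]
    exact Quotient.eq
  obtain ⟨q, hq⟩ := exists_polynomial_fiber_reciprocity (Γ := Γ) hπ univ
  refine ⟨q, fun n => ?_⟩
  rw [(hq n).1, (hq n).2, card_properFiberColorings_univ hsurj hπ,
    card_fiberPairs_univ hsurj hπ, card_univ, Nat.card_eq_fintype_card]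
  exact ⟨rfl, rfl⟩

end Transfer

section Burnside

open MulAction

variable {G X : Type*} [Group G] [MulAction G X]

/-- The even points of `S` with respect to a sign character `χ`: those whose stabilizer lies in the
kernel of `χ`. For `χ = 1` this is all of `S`. -/
def evenPoints (χ : G →* ℤˣ) (S : SubMulAction G X) : SubMulAction G X where
  carrier := {x ∈ S | stabilizer G x ≤ χ.ker}
  smul_mem' g x := fun ⟨hxS, hx⟩ => by
    refine ⟨S.smul_mem g hxS, ?_⟩
    rw [stabilizer_smul_eq_stabilizer_map_conj, Subgroup.map_le_iff_le_comap]
    intro h hh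
    rw [Subgroup.mem_comap, MonoidHom.mem_ker, MulEquiv.coe_toMonoidHom, MulAut.conj_apply,
      map_mul, map_mul, map_inv, mul_inv_cancel_comm]
    exact hx hh

variable {χ : G →* ℤˣ} {S : SubMulAction G X} {x : X}

theorem mem_evenPoints : x ∈ evenPoints χ S ↔ x ∈ S ∧ ∀ g : G, g • x = x → χ g = 1 :=
  Iff.rfl

theorem card_quot_eq_card_orbits {p : X → Prop} (hp : ∀ x, p x ↔ x ∈ S)
    {r : {x // p x} → {x // p x} → Prop} (hr : ∀ x y, r x y ↔ ∃ g : G, y.1 = g • x.1) :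
    Nat.card (Quot r) = Nat.card (orbitRel.Quotient G S) := by
  refine Nat.card_congr (Quot.congr (Equiv.subtypeEquivRight hp) fun x y => ?_)
  rw [hr, orbitRel_apply, mem_orbit_symm, mem_orbit_iff]
  exact exists_congr fun g => by simp [Subtype.ext_iff, eq_comm]

variable [Fintype G]

open Classical in
theorem sum_character_stabilizer (χ : G →* ℤˣ) (x : X) :
    ∑ g : G with g • x = x, (χ g : ℤ) =
      if stabilizer G x ≤ χ.ker then (#{g : G | g • x = x} : ℤ) else 0 := by
  let f : stabilizer G x →* ℤ := (Units.coeHom ℤ).comp (χ.comp (stabilizer G x).subtype)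
  have hf : f = 1 ↔ stabilizer G x ≤ χ.ker := by
    simp [f, DFunLike.ext_iff, SetLike.le_def, MonoidHom.mem_ker]
  have hmem (g : G) : g ∈ ({g : G | g • x = x} : Finset G) ↔ g ∈ stabilizer G x := by simp
  rw [← Fintype.card_of_subtype _ hmem, sum_subtype _ hmem]
  exact (sum_hom_units f).trans (by simp only [hf, Nat.cast_ite, Nat.cast_zero])

theorem sum_character_mul_ncard_fixed [Finite X] (χ : G →* ℤˣ) (S : SubMulAction G X) :
    ∑ g : G, (χ g : ℤ) * {x | x ∈ S ∧ g • x = x}.ncard =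
      ∑ g : G, ({x | x ∈ evenPoints χ S ∧ g • x = x}.ncard : ℤ) := by
  classical
  have := Fintype.ofFinite X
  simp only [Set.ncard_eq_toFinset_card', Set.toFinset_ofPred, card_filter, Nat.cast_sum, mul_sum]
  rw [sum_comm, sum_comm (s := univ (α := G))]
  refine sum_congr rfl fun x _ => ?_
  by_cases hx : x ∈ S
  · have heven : x ∈ evenPoints χ S ↔ stabilizer G x ≤ χ.ker := and_iff_right hx
    simp only [hx, true_and, heven, Nat.cast_ite, Nat.cast_one, Nat.cast_zero, mul_ite, mul_one,
      mul_zero, ← sum_filter, sum_character_stabilizer]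
    split_ifs with hker <;> simp [hker]
  · simp [hx, mem_evenPoints]

theorem sum_character_mul_ncard_fixed_eq_card_mul_card_orbits [Finite X] (χ : G →* ℤˣ)
    (S : SubMulAction G X) :
    ∑ g : G, (χ g : ℤ) * {x | x ∈ S ∧ g • x = x}.ncard =
      Fintype.card G * Nat.card (orbitRel.Quotient G (evenPoints χ S)) := by
  classical
  have := Fintype.ofFinite X
  have := Fintype.ofFinite (orbitRel.Quotient G (evenPoints χ S))
  have hfixed (g : G) : {x | x ∈ evenPoints χ S ∧ g • x = x}.ncard =
      Fintype.card (fixedBy (evenPoints χ S) g) := by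
    rw [← Nat.card_eq_fintype_card, Nat.card_coe_set_eq,
      ← Set.ncard_image_of_injective _ Subtype.val_injective]
    congr 1
    ext x
    simp [Subtype.ext_iff, and_comm]
  rw [sum_character_mul_ncard_fixed, Nat.card_eq_fintype_card, mul_comm]
  simp only [hfixed]
  exact_mod_cast sum_card_fixedBy_eq_card_orbits_mul_card_group G (evenPoints χ S)

end Burnside

section Equivariance

open MulAction

attribute [local instance] arrowAction

variable {V G : Type*} [Group G] [MulAction G V] {Γ : SimpleGraph V} [ActsOnGraph G Γ] {n : ℕ}

instance : SMul G (GraphOri Γ) where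
  smul g σ := ⟨fun e => g • σ.1 (SimpleGraph.Hom.mapEdgeSet
    ⟨(g⁻¹ • ·), ActsOnGraph.smul_adj g⁻¹ _ _⟩ e), fun e => by
      obtain ⟨v, hv, hσ⟩ := Sym2.mem_map.1 (σ.2 (SimpleGraph.Hom.mapEdgeSet
        ⟨(g⁻¹ • ·), ActsOnGraph.smul_adj g⁻¹ _ _⟩ e))
      rw [inv_smul_eq_iff.1 hσ] at hv
      exact hv⟩

theorem oriSMulEq_iff {hact : ∀ (g : G) (u v : V), Γ.Adj u v → Γ.Adj (g • u) (g • v)} {g : G}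
    {σ τ : GraphOri Γ} : oriSMulEq Γ hact g σ τ ↔ τ = g • σ := by
  refine ⟨fun h => Subtype.ext (funext ?_), by rintro rfl u v h; rfl⟩
  rintro ⟨e, he⟩
  induction e using Sym2.ind with | _ u v => exact h u v he

theorem dirAdj_smul_iff {g : G} {σ : GraphOri Γ} {u v : V} :
    dirAdj Γ (g • σ) u v ↔ dirAdj Γ σ (g⁻¹ • u) (g⁻¹ • v) := by
  constructor
  · rintro ⟨h, hv⟩
    exact ⟨(smul_adj_smul_iff g⁻¹).2 h, eq_inv_smul_iff.2 hv⟩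
  · rintro ⟨h, hv⟩
    exact ⟨(smul_adj_smul_iff g⁻¹).1 h, eq_inv_smul_iff.1 hv⟩

instance : MulAction G (GraphOri Γ) where
  one_smul σ := dirAdj_injective (by ext u v; simp [dirAdj_smul_iff])
  mul_smul g h σ := dirAdj_injective (by ext u v; simp [dirAdj_smul_iff, mul_smul])

theorem smul_coloring_eq_self_iff {β : Type*} {g : G} {c : V → β} :
    g • c = c ↔ ∀ v, c (g • v) = c v := by
  have hsmul : g⁻¹ • c = fun v => c (g • v) := funext fun v => congrArg (c <| · • v) (inv_inv g)
  rw [eq_comm, ← inv_smul_eq_iff, hsmul, funext_iff]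

theorem smul_orientation_eq_self_iff {g : G} {σ : GraphOri Γ} :
    g • σ = σ ↔ ∀ u v, dirAdj Γ σ (g • u) (g • v) ↔ dirAdj Γ σ u v := by
  rw [eq_comm, ← inv_smul_eq_iff, ← dirAdj_injective.eq_iff]
  simp only [funext_iff, dirAdj_smul_iff, inv_inv, eq_iff_iff]

theorem forall_zpowers_smul_eq_iff {X : Type*} [MulAction G X] {g : G} {x : X} :
    (∀ h : Subgroup.zpowers g, (h : G) • x = x) ↔ g • x = x := by
  rw [Subtype.forall]
  exact Subgroup.zpowers_le (H := stabilizer G x)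

/-- The proper colorings as a `G`-stable set. -/
def properColoringsSubMulAction (G : Type*) [Group G] [MulAction G V] (Γ : SimpleGraph V)
    [ActsOnGraph G Γ] (n : ℕ) : SubMulAction G (V → Fin n) where
  carrier := properColorings Γ n
  smul_mem' g _ hc _ _ huv := hc _ _ ((smul_adj_smul_iff g⁻¹).2 huv)

/-- The weakly compatible pairs as a `G`-stable set. -/
def compatiblePairsSubMulAction (G : Type*) [Group G] [MulAction G V] (Γ : SimpleGraph V)
    [ActsOnGraph G Γ] (n : ℕ) : SubMulAction G ((V → Fin n) × GraphOri Γ) where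
  carrier := compatiblePairs Γ n
  smul_mem' g x hx := by
    obtain ⟨c, σ⟩ := x
    obtain ⟨hacyc, hmono⟩ := hx
    rw [weakCompat_iff] at hmono
    refine ⟨fun v hv => hacyc (g⁻¹ • v) ?_, weakCompat_iff.2 fun u v huv => ?_⟩
    · exact hv.lift (g⁻¹ • ·) fun _ _ => dirAdj_smul_iff.1
    · exact hmono _ _ (dirAdj_smul_iff.1 huv)

theorem invariantColorings_zpowers (g : G) : invariantColorings Γ (Subgroup.zpowers g) n =
    {c | c ∈ properColoringsSubMulAction G Γ n ∧ g • c = c} := by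
  ext c
  rw [Set.mem_ofPred_eq, ← forall_zpowers_smul_eq_iff]
  simp only [smul_coloring_eq_self_iff]
  rfl

theorem invariantPairs_zpowers (g : G) : invariantPairs Γ (Subgroup.zpowers g) n =
    {x | x ∈ compatiblePairsSubMulAction G Γ n ∧ g • x = x} := by
  ext x
  rw [Set.mem_ofPred_eq, ← forall_zpowers_smul_eq_iff]
  simp only [Prod.ext_iff, Prod.smul_fst, Prod.smul_snd, forall_and, smul_coloring_eq_self_iff,
    smul_orientation_eq_self_iff]
  rfl

variable [Fintype G]

theorem sum_ncard_invariantColorings [Finite V] (Γ : SimpleGraph V) [ActsOnGraph G Γ] (n : ℕ) :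
    ∑ g : G, (invariantColorings Γ (Subgroup.zpowers g) n).ncard =
      Fintype.card G * Nat.card (Quot fun c c' : {c : V → Fin n // ∀ u v, Γ.Adj u v → c u ≠ c v} =>
        ∃ g : G, ∀ x, c'.1 x = c.1 (g⁻¹ • x)) := by
  have h := sum_character_mul_ncard_fixed_eq_card_mul_card_orbits 1
    (properColoringsSubMulAction G Γ n)
  rw [card_quot_eq_card_orbits (S := evenPoints 1 (properColoringsSubMulAction G Γ n)) (G := G)]
  · simp only [MonoidHom.one_apply, Units.val_one, one_mul] at h
    simp only [invariantColorings_zpowers]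
    exact_mod_cast h
  · exact fun c => (and_iff_left fun _ _ => rfl).symm
  · exact fun c c' => exists_congr fun g => funext_iff.symm

theorem sum_sign_mul_ncard_invariantPairs [Fintype V] [DecidableEq V] (Γ : SimpleGraph V)
    (hact : ∀ (g : G) (u v : V), Γ.Adj u v → Γ.Adj (g • u) (g • v)) (n : ℕ) :
    ∑ g : G, (Equiv.Perm.sign (MulAction.toPerm g : Equiv.Perm V) : ℤ) *
        (invariantPairs Γ (Subgroup.zpowers g) n).ncard =
      Fintype.card G * Nat.card (Quot fun x y : {pr : (V → Fin n) × GraphOri Γ //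
          oriAcyclic Γ pr.2 ∧ weakCompat Γ pr.1 pr.2 ∧
          ∀ g : G, ((∀ v, pr.1 (g⁻¹ • v) = pr.1 v) ∧ oriSMulEq Γ hact g pr.2 pr.2) →
            Equiv.Perm.sign (MulAction.toPerm g : Equiv.Perm V) = 1} =>
        ∃ g : G, (∀ v, y.1.1 v = x.1.1 (g⁻¹ • v)) ∧ oriSMulEq Γ hact g x.1.2 y.1.2) := by
  have : ActsOnGraph G Γ := ⟨hact⟩
  have : Finite (GraphOri Γ) := inferInstanceAs (Finite {σ : Γ.edgeSet → V // _})
  let χ : G →* ℤˣ := Equiv.Perm.sign.comp (MulAction.toPermHom G V)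
  have h := sum_character_mul_ncard_fixed_eq_card_mul_card_orbits χ
    (compatiblePairsSubMulAction G Γ n)
  rw [card_quot_eq_card_orbits (S := evenPoints χ (compatiblePairsSubMulAction G Γ n)) (G := G)]
  · simp only [invariantPairs_zpowers]
    exact h
  · rintro ⟨c, σ⟩
    simp only [mem_evenPoints, oriSMulEq_iff, ← and_assoc, Prod.ext_iff, funext_iff,
      eq_comm (a := σ)]
    rfl
  · rintro ⟨⟨c, σ⟩, hx⟩ ⟨⟨c', σ'⟩, hy⟩
    simp only [oriSMulEq_iff, Prod.ext_iff, funext_iff]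
    rfl

end Equivariance

section Sign

theorem card_image_eq_card_image {ι α β : Type*} [DecidableEq α] [DecidableEq β] {s : Finset ι}
    {f : ι → α} {g : ι → β} (h : ∀ i ∈ s, ∀ j ∈ s, f i = f j ↔ g i = g j) :
    #(s.image f) = #(s.image g) := by
  let t := s.image fun i => (f i, g i)
  have hmem {x} (hx : x ∈ (t : Set (α × β))) : ∃ i ∈ s, (f i, g i) = x := mem_image.1 hx
  have hfst : Set.InjOn Prod.fst (t : Set (α × β)) := fun x hx y hy hxy => by
    obtain ⟨i, hi, rfl⟩ := hmem hx
    obtain ⟨j, hj, rfl⟩ := hmem hy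
    exact Prod.ext hxy ((h i hi j hj).1 hxy)
  have hsnd : Set.InjOn Prod.snd (t : Set (α × β)) := fun x hx y hy hxy => by
    obtain ⟨i, hi, rfl⟩ := hmem hx
    obtain ⟨j, hj, rfl⟩ := hmem hy
    exact Prod.ext ((h i hi j hj).2 hxy) hxy
  calc
    #(s.image f) = #(t.image Prod.fst) := by rw [image_image]; rfl
    _ = #(t.image Prod.snd) := by rw [card_image_of_injOn hfst, card_image_of_injOn hsnd]
    _ = #(s.image g) := by rw [image_image]; rfl

variable {V : Type*} [Fintype V] [DecidableEq V]

theorem image_cycleOf_support (f : Equiv.Perm V) :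
    f.support.image f.cycleOf = f.cycleFactorsFinset := by
  ext c
  rw [mem_image]
  constructor
  · rintro ⟨v, hv, rfl⟩
    exact Equiv.Perm.cycleOf_mem_cycleFactorsFinset_iff.2 hv
  · intro hc
    obtain ⟨v, hv, -⟩ := (Equiv.Perm.mem_cycleFactorsFinset_iff.1 hc).1
    have hv : v ∈ c.support := Equiv.Perm.mem_support.2 hv
    exact ⟨v, Equiv.Perm.mem_cycleFactorsFinset_support_le hc hv,
      (Equiv.Perm.cycle_is_cycleOf hv hc).symm⟩

theorem card_eq_card_cycleFactorsFinset_add {α : Type*} [Fintype α] {f : Equiv.Perm V}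
    {π : V → α} (hsurj : Function.Surjective π)
    (hπ : ∀ u v, π u = π v ↔ f.SameCycle u v) :
    Fintype.card α = #f.cycleFactorsFinset + #f.supportᶜ := by
  classical
  have hdisj : Disjoint (f.support.image π) (f.supportᶜ.image π) := by
    simp only [disjoint_left, mem_image, mem_compl]
    rintro _ ⟨u, hu, rfl⟩ ⟨v, hv, huv⟩
    exact hv (((hπ v u).1 huv).mem_support_iff.2 hu)
  have hfixed : Set.InjOn π (f.supportᶜ : Finset V) := fun u hu v _ huv => by
    have hu : f u = u := by simpa using hu
    obtain ⟨k, rfl⟩ := (hπ u v).1 huv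
    exact (Equiv.Perm.zpow_apply_eq_self_of_apply_eq_self hu k).symm
  have hmoved : #(f.support.image π) = #f.cycleFactorsFinset := by
    rw [← image_cycleOf_support]
    exact card_image_eq_card_image fun u hu v hv => (hπ u v).trans
      (Equiv.Perm.sameCycle_iff_cycleOf_eq_of_mem_support hu hv)
  rw [← hmoved, ← card_image_of_injOn hfixed, ← card_union_of_disjoint hdisj,
    ← image_union, union_compl, image_univ_of_surjective hsurj, card_univ]

theorem sign_eq_neg_one_pow_card_orbits {G : Type*} [Group G] [MulAction G V] (g : G) :
    (Equiv.Perm.sign (MulAction.toPerm g : Equiv.Perm V) : ℤ) = (-1) ^ Fintype.card V *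
      (-1) ^ Nat.card (MulAction.orbitRel.Quotient (Subgroup.zpowers g) V) := by
  classical
  have := Fintype.ofFinite (MulAction.orbitRel.Quotient (Subgroup.zpowers g) V)
  let f : Equiv.Perm V := MulAction.toPerm g
  have hzpow (k : ℤ) (v : V) : (f ^ k) v = g ^ k • v :=
    (congrArg (· v) (map_zpow (MulAction.toPermHom G V) g k)).symm
  have horbits := card_eq_card_cycleFactorsFinset_add (f := f)
    (Quotient.mk_surjective (s := MulAction.orbitRel (Subgroup.zpowers g) V)) fun u v => by
      rw [Quotient.eq, Setoid.comm', MulAction.orbitRel_apply, MulAction.mem_orbit_iff,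
        Subgroup.exists_zpowers]
      simp [Equiv.Perm.SameCycle, hzpow, Subgroup.smul_def]
  rw [Nat.card_eq_fintype_card, horbits, Equiv.Perm.sign_of_cycleType, Equiv.Perm.sum_cycleType,
    Equiv.Perm.cycleType_def, Multiset.card_map, card_val, ← card_add_card_compl f.support]
  push_cast
  have hsquare : (-1 : ℤ) ^ #f.supportᶜ * (-1) ^ #f.supportᶜ = 1 := by simp [← mul_pow]
  rw [pow_add, pow_add, pow_add]
  linear_combination (-(-1) ^ #f.support * (-1) ^ #f.cycleFactorsFinset) * hsquare

theorem exists_polynomial_zpowers_reciprocity {G : Type*} [Group G] [MulAction G V]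
    (Γ : SimpleGraph V) [ActsOnGraph G Γ] (g : G) :
    ∃ q : ℚ[X], ∀ n : ℕ,
      q.eval (n : ℚ) = (invariantColorings Γ (Subgroup.zpowers g) n).ncard ∧
      q.eval (-n : ℚ) = (-1) ^ Fintype.card V *
        ((Equiv.Perm.sign (MulAction.toPerm g : Equiv.Perm V) : ℤ) *
          (invariantPairs Γ (Subgroup.zpowers g) n).ncard) := by
  obtain ⟨q, hq⟩ := exists_polynomial_invariant_reciprocity Γ (Subgroup.zpowers g)
  refine ⟨q, fun n => ⟨(hq n).1, ?_⟩⟩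
  rw [(hq n).2, sign_eq_neg_one_pow_card_orbits, ← mul_assoc]
  push_cast
  rw [← mul_assoc, ← mul_pow, neg_one_mul, neg_neg, one_pow, one_mul]

end Sign

theorem eq_of_forall_one_le_eval_eq {R : Type*} [CommRing R] [IsDomain R] [CharZero R] {p q : R[X]}
    (h : ∀ n : ℕ, 1 ≤ n → p.eval (n : R) = q.eval (n : R)) : p = q :=
  eq_of_infinite_eval_eq p q <|
    ((Set.Ici_infinite 1).image Nat.cast_injective.injOn).mono (Set.image_subset_iff.2 h)

end OrbitalChromatic

open OrbitalChromatic

/-- Let `Γ` be a finite simple graph and `G` a finite group acting on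
`Γ` by automorphisms, and let `χ_{Γ,G}` be the polynomial with
`χ_{Γ,G}(n) = |Col_n(Γ)/G|` for all integers `n ≥ 1`.  Then for all integers `n ≥ 1`,
`χ_{Γ,G}(-n) = (-1)^{|V|} · |Σ_{n,+}(Γ)/G|`, the number of `G`-orbits of even weakly
compatible pairs of an `n`-coloring and an acyclic orientation, up to sign.
(A pair is even if every `g ∈ G` stabilizing it has sign `+1` as a permutation of `V`;
`G` acts on pairs by `g • (c,σ) = (g • c, g • σ)`.) -/
theorem stmt_15 {V G : Type*} [Fintype V] [DecidableEq V] [Group G] [Fintype G]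
    [MulAction G V] (Γ : SimpleGraph V)
    (hact : ∀ (g : G) (u v : V), Γ.Adj u v → Γ.Adj (g • u) (g • v))
    (p : Polynomial ℚ)
    (hp : ∀ n : ℕ, 1 ≤ n →
      p.eval (n : ℚ) =
        Nat.card (Quot (fun c c' : {c : V → Fin n // ∀ u v : V, Γ.Adj u v → c u ≠ c v} =>
          ∃ g : G, ∀ x : V, c'.1 x = c.1 (g⁻¹ • x))))
    (n : ℕ) (hn : 1 ≤ n) :
    p.eval (-(n : ℚ)) = (-1) ^ (Fintype.card V) *
      Nat.card (Quot (fun x y : {pr : (V → Fin n) × GraphOri Γ //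
          oriAcyclic Γ pr.2 ∧ weakCompat Γ pr.1 pr.2 ∧
          ∀ g : G, ((∀ v : V, pr.1 (g⁻¹ • v) = pr.1 v) ∧ oriSMulEq Γ hact g pr.2 pr.2) →
            Equiv.Perm.sign (MulAction.toPerm g : Equiv.Perm V) = 1} =>
        ∃ g : G, (∀ v : V, y.1.1 v = x.1.1 (g⁻¹ • v)) ∧
          oriSMulEq Γ hact g x.1.2 y.1.2)) := by
  have : ActsOnGraph G Γ := ⟨hact⟩
  choose q hq using exists_polynomial_zpowers_reciprocity (G := G) Γ
  have hcolorings : C (Fintype.card G : ℚ) * p = ∑ g, q g := by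
    refine eq_of_forall_one_le_eval_eq fun m hm => ?_
    simp only [eval_mul, eval_C, hp m hm, eval_finsetSum, (hq _ m).1]
    exact_mod_cast (sum_ncard_invariantColorings (G := G) Γ m).symm
  have hcard : (Fintype.card G : ℚ) ≠ 0 := Nat.cast_ne_zero.2 Fintype.card_ne_zero
  refine mul_left_cancel₀ hcard ?_
  calc
    Fintype.card G * p.eval (-n : ℚ) = ∑ g, (q g).eval (-n : ℚ) := by
      rw [← eval_finsetSum, ← hcolorings, eval_mul, eval_C]
    _ = (-1) ^ Fintype.card V * ∑ g : G,
        ((Equiv.Perm.sign (MulAction.toPerm g : Equiv.Perm V) : ℤ) : ℚ) *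
          (invariantPairs Γ (Subgroup.zpowers g) n).ncard := by
      simp only [(hq _ n).2, mul_sum]
    _ = _ := by
      rw [mul_left_comm]
      exact congrArg _ (mod_cast sum_sign_mul_ncard_invariantPairs Γ hact n)
end

section
/- Let Γ be a finite simple graph and let Z_2 = {e,τ} act on Γ by automorphisms with sgn(τ) = -1 as permutation of the vertices. Let χ_{Γ,Z_2} be the polynomial with χ_{Γ,Z_2}(n) = |Col_n(Γ)/Z_2| for all n ≥ 1. Then χ_{Γ,Z_2}(-1) = (-1)^{|V|} · |Σ_+|/2, where Σ_+ is the set of even acyclic orientations of Γ. -/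
/-!
By Burnside's lemma, `|G| · χ(n)` counts the pairs of an element `g` and an `n`-coloring fixed by
`g`. Orienting every edge towards its larger color splits these colorings according to an acyclic
orientation `σ` fixed by `g`, and those inducing `σ` are the strict order-preserving labelings of
the quotient of `σ` by `⟨g⟩`. Stanley reciprocity gives the number of such labelings, a polynomial
in `n`, the value `(-1) ^ #(V / ⟨g⟩) = (-1) ^ |V| · sgn g` at `n = -1`. Summing `sgn g` over the
pairs `(g, σ)` leaves only the orientations with even stabilizers and counts their orbits.
-/

open MulAction Polynomial

section StrictLabeling

/-- The strict order-preserving labelings of `(W, r)` by `Fin n`. For an acyclic relation `r`, their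
number is the value at `n` of the strict order polynomial of `r`. -/
abbrev StrictLabeling {W : Type*} (r : W → W → Prop) (n : ℕ) : Type _ :=
  r →r ((· < ·) : Fin n → Fin n → Prop)

variable {W : Type*} {r : W → W → Prop}

/-- Labelings by `Fin (n + 1)` with label `0` exactly on `I` are, after lowering the other labels
by one, the labelings of the complement of `I` by `Fin n`. -/
def StrictLabeling.zeroSetEquiv {I : Finset W} [DecidablePred (· ∈ I)]
    (hI : ∀ w ∈ I, ∀ v, ¬ r v w) (n : ℕ) :
    {c : StrictLabeling r (n + 1) // ∀ w, c w = 0 ↔ w ∈ I} ≃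
      StrictLabeling (Subrel r (· ∉ I)) n where
  toFun c :=
    { toFun := fun w => (c.1 w).pred (mt (c.2 w).1 w.2)
      map_rel' := fun h => Fin.pred_lt_pred_iff.2 (c.1.map_rel h) }
  invFun c :=
    ⟨{  toFun := fun w => if hw : w ∈ I then 0 else (c ⟨w, hw⟩).succ
        map_rel' := by
          intro u v huv
          have hv : v ∉ I := fun hv => hI v hv u huv
          by_cases hu : u ∈ I
          · simp [hu, hv]
          · simpa [hu, hv] using c.map_rel (a := ⟨u, hu⟩) (b := ⟨v, hv⟩) huv },
      fun w => by by_cases hw : w ∈ I <;> simp [hw]⟩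
  left_inv c := by
    ext w
    by_cases hw : w ∈ I
    · simp [hw, (c.2 w).2 hw]
    · simp [hw]
  right_inv c := by
    ext w
    simp [w.2]

theorem card_strictLabeling_succ [Finite W] {M : Finset W} (hM : ∀ w, w ∈ M ↔ ∀ v, ¬ r v w)
    (n : ℕ) :
    Nat.card (StrictLabeling r (n + 1)) =
      ∑ I ∈ M.powerset, Nat.card (StrictLabeling (Subrel r (· ∉ I)) n) := by
  classical
  have := Fintype.ofFinite W
  have := Fintype.ofFinite (StrictLabeling r (n + 1))
  have zeroSet_mem (c : StrictLabeling r (n + 1)) : ({w | c w = 0} : Finset W) ∈ M.powerset := by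
    refine Finset.mem_powerset.2 fun w hw => (hM w).2 fun v hvw => ?_
    have hlt := c.map_rel hvw
    rw [(Finset.mem_filter.1 hw).2] at hlt
    exact Fin.not_lt_zero _ hlt
  rw [Nat.card_eq_fintype_card, ← Finset.card_univ,
    Finset.card_eq_sum_card_fiberwise fun c _ => zeroSet_mem c]
  refine Finset.sum_congr rfl fun I hI => ?_
  have hI' : ∀ w ∈ I, ∀ v, ¬ r v w := fun w hw => (hM w).1 (Finset.mem_powerset.1 hI hw)
  rw [← Nat.card_congr (StrictLabeling.zeroSetEquiv hI' n), Nat.card_eq_fintype_card,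
    Fintype.card_subtype]
  simp only [Finset.ext_iff, Finset.mem_filter_univ]

theorem card_strictLabeling_subrel_notMem_empty (n : ℕ) :
    Nat.card (StrictLabeling (Subrel r (· ∉ (∅ : Finset W))) n) = Nat.card (StrictLabeling r n) :=
  let e : Subrel r (· ∉ (∅ : Finset W)) ≃r r :=
    ⟨Equiv.subtypeUnivEquiv Finset.notMem_empty, Iff.rfl⟩
  Nat.card_congr
    { toFun := fun c => c.comp e.symm.toRelEmbedding.toRelHom
      invFun := fun c => c.comp e.toRelEmbedding.toRelHom
      left_inv := fun _ => rfl
      right_inv := fun _ => rfl }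

theorem card_strictLabeling_of_isEmpty [IsEmpty W] (n : ℕ) : Nat.card (StrictLabeling r n) = 1 :=
  have : Unique (StrictLabeling r n) :=
    { default := ⟨isEmptyElim, fun {w} => isEmptyElim w⟩
      uniq := fun _ => RelHom.ext isEmptyElim }
  Nat.card_unique

theorem card_strictLabeling_zero [Nonempty W] : Nat.card (StrictLabeling r 0) = 0 :=
  have : IsEmpty (StrictLabeling r 0) := ⟨fun c => (c (Classical.arbitrary W)).elim0⟩
  Nat.card_of_isEmpty

theorem neg_one_pow_card_notMem {R : Type*} [Ring R] [Finite W] (I : Finset W) :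
    (-1 : R) ^ Nat.card {w // w ∉ I} = (-1) ^ Nat.card W * (-1) ^ I.card := by
  classical
  have := Fintype.ofFinite W
  have hcard : Nat.card W = Nat.card {w // w ∉ I} + I.card := by
    rw [Nat.card_eq_fintype_card, Nat.card_eq_fintype_card, Fintype.card_subtype_compl,
      Fintype.card_coe, Nat.sub_add_cancel I.card_le_univ]
  rw [hcard, pow_add, mul_assoc, ← pow_add, Even.neg_one_pow ⟨_, rfl⟩, mul_one]

theorem exists_nonempty_finset_mem_iff_minimal [Finite W] [Nonempty W] (hr : WellFounded r) :
    ∃ M : Finset W, M.Nonempty ∧ ∀ w, w ∈ M ↔ ∀ v, ¬ r v w := by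
  obtain ⟨m, -, hm⟩ := hr.has_min Set.univ Set.univ_nonempty
  have hfin := Set.toFinite {w | ∀ v, ¬ r v w}
  exact ⟨hfin.toFinset, ⟨m, hfin.mem_toFinset.2 fun v => hm v trivial⟩,
    fun _ => hfin.mem_toFinset⟩

theorem sum_powerset_erase_empty_neg_one_pow_card {α R : Type*} [DecidableEq α] [Ring R]
    {s : Finset α} (hs : s.Nonempty) :
    ∑ t ∈ s.powerset.erase ∅, (-1 : R) ^ t.card = -1 := by
  have h := congrArg (Int.cast : ℤ → R) (Finset.sum_powerset_neg_one_pow_card_of_nonempty hs)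
  rw [← Finset.add_sum_erase _ _ (Finset.empty_mem_powerset s)] at h
  push_cast at h
  exact eq_neg_of_add_eq_zero_right (by simpa using h)

theorem exists_polynomial_eval_add_one_eq_add (Q : ℚ[X]) :
    ∃ P : ℚ[X], P.eval 0 = 0 ∧ ∀ x, P.eval (x + 1) = P.eval x + Q.eval x := by
  suffices h : ∃ P : ℚ[X], ∀ x, P.eval (x + 1) = P.eval x + Q.eval x by
    obtain ⟨P, hP⟩ := h
    refine ⟨P - C (P.eval 0), by simp, fun x => ?_⟩
    rw [eval_sub, eval_sub, eval_C, eval_C, hP]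
    ring
  induction Q using Polynomial.induction_on' with
  | add Q Q' hQ hQ' =>
    obtain ⟨P, hP⟩ := hQ
    obtain ⟨P', hP'⟩ := hQ'
    refine ⟨P + P', fun x => ?_⟩
    rw [eval_add, eval_add, eval_add, hP, hP']
    ring
  | monomial k a =>
    refine ⟨C (a / (k + 1)) * Polynomial.bernoulli (k + 1), fun x => ?_⟩
    have hk : (k : ℚ) + 1 ≠ 0 := by positivity
    simp only [add_comm x 1, eval_mul, eval_C, eval_monomial, bernoulli_eval_one_add,
      Nat.add_sub_cancel]
    push_cast
    field_simp

/-- Splitting a labeling by its set of zeros `I`, a set of minimal elements, gives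
`P (n + 1) = ∑ I, P_I n` for the polynomials `P_I` of the complements of the sets `I`. At `n = -1`
the left side is `P 0 = 0`, which expresses `P (-1) = P_∅ (-1)` by the values at `-1` of the
polynomials of smaller relations. -/
theorem exists_strictOrderPolynomial [Finite W] (hr : WellFounded r) :
    ∃ P : ℚ[X], (∀ n : ℕ, P.eval (n : ℚ) = Nat.card (StrictLabeling r n)) ∧
      P.eval (-1) = (-1) ^ Nat.card W := by
  classical
  induction hk : Nat.card W using Nat.strong_induction_on generalizing W with
  | _ k ih =>
  rcases isEmpty_or_nonempty W with hW | hW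
  · refine ⟨1, fun n => ?_, by simp [← hk]⟩
    rw [card_strictLabeling_of_isEmpty, eval_one, Nat.cast_one]
  obtain ⟨M, hM_nonempty, hM⟩ := exists_nonempty_finset_mem_iff_minimal hr
  have exists_compl (I : Finset W) (hI : I ≠ ∅) : ∃ P : ℚ[X],
      (∀ n : ℕ, P.eval (n : ℚ) = Nat.card (StrictLabeling (Subrel r (· ∉ I)) n)) ∧
        P.eval (-1) = (-1) ^ k * (-1) ^ I.card := by
    obtain ⟨w, hw⟩ := Finset.nonempty_iff_ne_empty.2 hI
    obtain ⟨P, hP, hP_neg⟩ := ih (Nat.card {w // w ∉ I})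
      (hk ▸ Finite.card_subtype_lt (not_not.2 hw)) (r := Subrel r (· ∉ I))
      (InvImage.wf Subtype.val hr) rfl
    exact ⟨P, hP, by rw [hP_neg, neg_one_pow_card_notMem, hk]⟩
  choose! P hP hP_neg using exists_compl
  have ne_empty {I : Finset W} (hI : I ∈ M.powerset.erase ∅) : I ≠ ∅ := Finset.ne_of_mem_erase hI
  obtain ⟨R, hR_zero, hR⟩ :=
    exists_polynomial_eval_add_one_eq_add (∑ I ∈ M.powerset.erase ∅, P I)
  refine ⟨R, fun n => ?_, ?_⟩
  · induction n with
    | zero => rw [card_strictLabeling_zero, Nat.cast_zero, hR_zero]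
    | succ n ihn =>
      rw [card_strictLabeling_succ hM, ← Finset.add_sum_erase _ _ (Finset.empty_mem_powerset M),
        card_strictLabeling_subrel_notMem_empty]
      push_cast
      rw [hR, ihn, eval_finsetSum, Finset.sum_congr rfl fun I hI => hP I (ne_empty hI) n]
  · have h := hR (-1)
    rw [neg_add_cancel, hR_zero, eval_finsetSum,
      Finset.sum_congr rfl fun I hI => hP_neg I (ne_empty hI), ← Finset.mul_sum,
      sum_powerset_erase_empty_neg_one_pow_card hM_nonempty] at h
    linarith

end StrictLabeling

section Burnside

variable {G : Type*} [Group G]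

theorem sum_mul_card_fixedBy (X : Type*) [MulAction G X] [Fintype G] [Fintype X] [DecidableEq X]
    (f : G → ℤ) :
    ∑ g, f g * Nat.card (fixedBy X g) = ∑ x : X, ∑ g : stabilizer G x, f g := by
  have h_fixed (g : G) : f g * Nat.card (fixedBy X g) = ∑ x : X, if g • x = x then f g else 0 := by
    rw [← Finset.sum_filter, Finset.sum_const, nsmul_eq_mul, mul_comm, Nat.card_eq_fintype_card,
      ← Fintype.card_subtype]
    rfl
  have h_stab (x : X) : ∑ g : stabilizer G x, f g = ∑ g, if g • x = x then f g else 0 := by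
    rw [← Finset.sum_filter]
    exact (Finset.sum_subtype _ (by simp) _).symm
  simp only [h_fixed, h_stab]
  exact Finset.sum_comm

theorem card_mul_card_orbits (X : Type*) [MulAction G X] [Fintype G] [Finite X] :
    Nat.card G * Nat.card (orbitRel.Quotient G X) = ∑ g : G, Nat.card (fixedBy X g) := by
  rw [← Nat.card_sigma, Nat.card_congr (sigmaFixedByEquivOrbitsProdGroup G X), Nat.card_prod,
    mul_comm]

/-- The points of `X` whose stabilizer lies in the kernel of `ε`; when `ε` is a sign, these are the
points with only even symmetries. -/
def evenPoints {A : Type*} [CommGroup A] (ε : G →* A) (X : Type*) [MulAction G X] :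
    SubMulAction G X where
  carrier := {x | ∀ g : G, g • x = x → ε g = 1}
  smul_mem' h x hx g hg := by
    have hconj : (h⁻¹ * g * h) • x = x := by rw [mul_smul, mul_smul, hg, inv_smul_smul]
    have h_eps := hx _ hconj
    rwa [map_mul, map_mul, map_inv, inv_mul_cancel_comm] at h_eps

theorem mem_evenPoints {A : Type*} [CommGroup A] {ε : G →* A} {X : Type*} [MulAction G X] {x : X} :
    x ∈ evenPoints ε X ↔ ∀ g : G, g • x = x → ε g = 1 :=
  Iff.rfl

theorem sum_stabilizer_coe_units {X : Type*} [MulAction G X] (ε : G →* ℤˣ) (x : X)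
    [Decidable (x ∈ evenPoints ε X)] [Fintype (stabilizer G x)] :
    ∑ g : stabilizer G x, (ε g : ℤ) =
      if x ∈ evenPoints ε X then (Nat.card (stabilizer G x) : ℤ) else 0 := by
  classical
  let f : stabilizer G x →* ℤ := (Units.coeHom ℤ).comp (ε.comp (stabilizer G x).subtype)
  have hf : f = 1 ↔ x ∈ evenPoints ε X := by
    simp [f, MonoidHom.ext_iff, mem_evenPoints]
  have h_sum := sum_hom_units f
  simp only [hf, ← Nat.card_eq_fintype_card, Nat.cast_ite, Nat.cast_zero] at h_sum
  exact h_sum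

theorem sum_units_mul_card_fixedBy (X : Type*) [MulAction G X] [Fintype G] [Finite X]
    (ε : G →* ℤˣ) :
    ∑ g, (ε g : ℤ) * Nat.card (fixedBy X g) =
      Nat.card G * Nat.card (orbitRel.Quotient G (evenPoints ε X)) := by
  classical
  have := Fintype.ofFinite X
  have h_burnside : ∑ g : G, (1 : ℤ) * Nat.card (fixedBy (evenPoints ε X) g) =
      Nat.card G * Nat.card (orbitRel.Quotient G (evenPoints ε X)) := by
    simp only [one_mul]
    exact_mod_cast (card_mul_card_orbits (G := G) (evenPoints ε X)).symm
  rw [← h_burnside, sum_mul_card_fixedBy, sum_mul_card_fixedBy]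
  simp only [sum_stabilizer_coe_units, ← Finset.sum_filter]
  rw [Finset.sum_subtype _ (p := (· ∈ evenPoints ε X)) (by simp)]
  refine Finset.sum_congr rfl fun x _ => ?_
  rw [Finset.sum_const, nsmul_one, Finset.card_univ, ← Nat.card_eq_fintype_card,
    SubMulAction.stabilizer_of_subMul]

theorem card_evenPoints_of_injective {A X : Type*} [CommGroup A] [MulAction G X] {ε : G →* A}
    (hε : Function.Injective ε) :
    Nat.card (evenPoints ε X) =
      Nat.card (orbitRel.Quotient G (evenPoints ε X)) * Nat.card G := by
  have h_stab (x : evenPoints ε X) : stabilizer G x = ⊥ :=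
    (Subgroup.eq_bot_iff_forall _).2 fun g hg =>
      hε ((x.2 g (congrArg Subtype.val hg)).trans (map_one ε).symm)
  rw [Nat.card_congr (selfEquivOrbitsQuotientProd h_stab), Nat.card_prod]

end Burnside

section Sign

variable {G V : Type*} [Group G] [MulAction G V]

theorem orbitRel_zpowers_iff_sameCycle {g : G} {x y : V} :
    orbitRel (Subgroup.zpowers g) V x y ↔ (toPerm g : Equiv.Perm V).SameCycle x y := by
  rw [Equiv.Perm.sameCycle_comm]
  constructor
  · rintro ⟨⟨_, k, rfl⟩, hk⟩
    exact ⟨k, by rwa [← toPermHom_apply, ← map_zpow]⟩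
  · rintro ⟨k, hk⟩
    exact ⟨⟨g ^ k, k, rfl⟩, by rwa [← toPermHom_apply, ← map_zpow] at hk⟩

theorem card_orbits_zpowers [Fintype V] [DecidableEq V] (g : G) :
    Nat.card (orbitRel.Quotient (Subgroup.zpowers g) V) =
      (toPerm g : Equiv.Perm V).cycleType.card +
        (Fintype.card V - (toPerm g : Equiv.Perm V).cycleType.sum) := by
  set f : Equiv.Perm V := toPerm g
  let cycleOrFixedPoint (x : V) : f.cycleFactorsFinset ⊕ Function.fixedPoints f :=
    if hx : f x = x then .inr ⟨x, hx⟩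
    else .inl ⟨f.cycleOf x, Equiv.Perm.cycleOf_mem_cycleFactorsFinset_iff.2 (by simpa using hx)⟩
  have eq_iff (x y : V) : cycleOrFixedPoint x = cycleOrFixedPoint y ↔ f.SameCycle x y := by
    by_cases hx : f x = x <;> by_cases hy : f y = y
    · simp only [cycleOrFixedPoint, hx, hy, dite_true, Sum.inr.injEq, Subtype.ext_iff]
      exact ⟨fun h => h.sameCycle f, fun h => h.eq_of_left hx⟩
    · have : ¬ f.SameCycle x y := fun h => hy (h.apply_eq_self_iff.1 hx)
      simp [cycleOrFixedPoint, hx, hy, this]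
    · have : ¬ f.SameCycle x y := fun h => hx (h.apply_eq_self_iff.2 hy)
      simp [cycleOrFixedPoint, hx, hy, this]
    · simp only [cycleOrFixedPoint, hx, hy, dite_false, Sum.inl.injEq, Subtype.mk.injEq]
      exact (Equiv.Perm.sameCycle_iff_cycleOf_eq_of_mem_support (Equiv.Perm.mem_support.2 hx)
        (Equiv.Perm.mem_support.2 hy)).symm
  have surj : Function.Surjective cycleOrFixedPoint := by
    rintro (⟨c, hc⟩ | ⟨x, hx⟩)
    · obtain ⟨x, hx⟩ := (Equiv.Perm.mem_cycleFactorsFinset_iff.1 hc).1.nonempty_support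
      have hfx := Equiv.Perm.mem_support.1 (Equiv.Perm.mem_cycleFactorsFinset_support_le hc hx)
      refine ⟨x, ?_⟩
      simp only [cycleOrFixedPoint, hfx, dite_false, Equiv.Perm.cycle_is_cycleOf hx hc]
    · exact ⟨x, dif_pos hx⟩
  let e : orbitRel.Quotient (Subgroup.zpowers g) V ≃
      f.cycleFactorsFinset ⊕ Function.fixedPoints f :=
    (Quotient.congrRight fun x y => orbitRel_zpowers_iff_sameCycle.trans (eq_iff x y).symm).trans
      (Setoid.quotientKerEquivOfSurjective _ surj)
  rw [Nat.card_congr e, Nat.card_sum, Nat.card_eq_fintype_card, Nat.card_eq_fintype_card,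
    f.card_fixedPoints, Fintype.card_coe, Equiv.Perm.cycleType_def, Multiset.card_map,
    Finset.card_def]

theorem neg_one_pow_card_orbits_zpowers [Fintype V] [DecidableEq V] (g : G) :
    (-1 : ℤˣ) ^ Nat.card (orbitRel.Quotient (Subgroup.zpowers g) V) =
      (-1) ^ Fintype.card V * Equiv.Perm.sign (toPerm g : Equiv.Perm V) := by
  have hle := (toPerm g : Equiv.Perm V).sum_cycleType_le
  rw [card_orbits_zpowers, Equiv.Perm.sign_of_cycleType]
  obtain ⟨k, hk⟩ := Nat.exists_eq_add_of_le hle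
  rw [hk, Nat.add_sub_cancel_left, pow_add, pow_add, pow_add, mul_mul_mul_comm, ← mul_pow]
  simp [mul_comm]

end Sign

section Orientations

variable {V : Type*} {Γ : SimpleGraph V} {σ σ' : GraphOri Γ} {u v : V}

theorem dirAdj_iff_apply_eq {e : Γ.edgeSet} (he : (e : Sym2 V) = s(u, v)) :
    dirAdj Γ σ u v ↔ σ.1 e = v := by
  obtain ⟨_, h⟩ := e
  subst he
  exact ⟨fun ⟨_, hv⟩ => hv, fun hv => ⟨h, hv⟩⟩

theorem dirAdj_or_dirAdj (σ : GraphOri Γ) (h : Γ.Adj u v) : dirAdj Γ σ u v ∨ dirAdj Γ σ v u := by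
  rw [dirAdj_iff_apply_eq (e := ⟨s(u, v), h⟩) rfl,
    dirAdj_iff_apply_eq (e := ⟨s(u, v), h⟩) Sym2.eq_swap, or_comm]
  exact Sym2.mem_iff.1 (σ.2 _)

theorem GraphOri.ext_dirAdj (h : ∀ u v, dirAdj Γ σ u v → dirAdj Γ σ' u v) : σ = σ' := by
  refine Subtype.ext (funext fun e => ?_)
  obtain ⟨u, hu⟩ := σ.2 e
  have he : (e : Sym2 V) = s(u, σ.1 e) := hu.trans Sym2.eq_swap
  exact ((dirAdj_iff_apply_eq he).1 (h _ _ ((dirAdj_iff_apply_eq he).2 rfl))).symm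

theorem oriAcyclic.wellFounded_transGen [Finite V] (hσ : oriAcyclic Γ σ) :
    WellFounded (Relation.TransGen (dirAdj Γ σ)) :=
  have : Std.Irrefl (Relation.TransGen (dirAdj Γ σ)) := ⟨hσ⟩
  Finite.wellFounded_of_trans_of_irrefl _

theorem lt_of_transGen_dirAdj {α : Type*} [Preorder α] {c : V → α}
    (hc : ∀ u v, dirAdj Γ σ u v → c u < c v) (h : Relation.TransGen (dirAdj Γ σ) u v) :
    c u < c v := by
  simpa only [Relation.transGen_eq_self] using h.lift c hc

variable {α : Type*} [LinearOrder α]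

/-- The orientation of a colored graph in which the head of an edge is its endpoint of larger
color. -/
noncomputable def GraphOri.ofColoring (c : Γ.Coloring α) : GraphOri Γ :=
  have exists_head (e : Γ.edgeSet) : ∃ v ∈ (e : Sym2 V), ∀ u ∈ (e : Sym2 V), c u ≤ c v := by
    obtain ⟨e, _⟩ := e
    induction e with
    | _ u v => rcases le_total (c u) (c v) with h | h <;> simp [h]
  ⟨fun e => (exists_head e).choose, fun e => (exists_head e).choose_spec.1⟩

namespace GraphOri

theorem le_apply_ofColoring (c : Γ.Coloring α) {e : Γ.edgeSet} (hu : u ∈ (e : Sym2 V)) :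
    c u ≤ c ((ofColoring c).1 e) :=
  (Exists.choose_spec (p := fun v => v ∈ (e : Sym2 V) ∧ ∀ u ∈ (e : Sym2 V), c u ≤ c v) _).2 u hu

theorem lt_of_dirAdj_ofColoring {c : Γ.Coloring α} (h : dirAdj Γ (ofColoring c) u v) :
    c u < c v := by
  obtain ⟨huv, hv⟩ := h
  have hle := le_apply_ofColoring c (e := ⟨s(u, v), huv⟩) (Sym2.mem_mk_left u v)
  rw [hv] at hle
  exact lt_of_le_of_ne hle (c.valid huv)

theorem ofColoring_eq_iff {c : Γ.Coloring α} :
    ofColoring c = σ ↔ ∀ u v, dirAdj Γ σ u v → c u < c v := by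
  refine ⟨fun h u v huv => lt_of_dirAdj_ofColoring (h ▸ huv), fun h => ext_dirAdj fun u v huv => ?_⟩
  exact (dirAdj_or_dirAdj σ huv.1).resolve_right
    fun hvu => (h v u hvu).asymm (lt_of_dirAdj_ofColoring huv)

theorem oriAcyclic_ofColoring (c : Γ.Coloring α) : oriAcyclic Γ (ofColoring c) :=
  fun _ h => (lt_of_transGen_dirAdj (fun _ _ => lt_of_dirAdj_ofColoring) h).false

instance instFinite [Finite V] : Finite (GraphOri Γ) :=
  inferInstanceAs (Finite {σ : Γ.edgeSet → V // ∀ e : Γ.edgeSet, σ e ∈ (e : Sym2 V)})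

end GraphOri

end Orientations

section ActsByAut

/-- The group `G` acts on the graph `Γ` by automorphisms. This is a class so that the colorings and
the orientations of `Γ` carry the induced actions as instances. -/
class ActsByAut (G : Type*) {V : Type*} [Group G] [MulAction G V] (Γ : SimpleGraph V) : Prop where
  adj_smul : ∀ (g : G) (u v : V), Γ.Adj u v → Γ.Adj (g • u) (g • v)

variable {V G : Type*} [Group G] [MulAction G V] {Γ : SimpleGraph V} [ActsByAut G Γ]

namespace ActsByAut

theorem adj_smul_iff (g : G) {u v : V} : Γ.Adj (g • u) (g • v) ↔ Γ.Adj u v :=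
  ⟨fun h => by simpa using adj_smul g⁻¹ _ _ h, adj_smul g u v⟩

theorem map_smul_mem_edgeSet (g : G) (e : Γ.edgeSet) : (e : Sym2 V).map (g • ·) ∈ Γ.edgeSet := by
  obtain ⟨e, he⟩ := e
  induction e with
  | _ u v => exact adj_smul g u v he

instance instMulActionColoring {α : Type*} : MulAction G (Γ.Coloring α) where
  smul g c := SimpleGraph.Coloring.mk (fun v => c (g⁻¹ • v))
    fun h => c.valid (adj_smul g⁻¹ _ _ h)
  one_smul c := by
    ext v
    change c ((1 : G)⁻¹ • v) = c v
    rw [inv_one, one_smul]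
  mul_smul g h c := by
    ext v
    change c ((g * h)⁻¹ • v) = c (h⁻¹ • g⁻¹ • v)
    rw [mul_inv_rev, mul_smul]

theorem coloring_smul_apply {α : Type*} (g : G) (c : Γ.Coloring α) (v : V) :
    (g • c) v = c (g⁻¹ • v) :=
  rfl

end ActsByAut

namespace GraphOri

theorem smul_apply_mem (g : G) (σ : GraphOri Γ) (e : Γ.edgeSet) :
    g • σ.1 ⟨_, ActsByAut.map_smul_mem_edgeSet g⁻¹ e⟩ ∈ (e : Sym2 V) := by
  obtain ⟨v, hv, h⟩ := Sym2.mem_map.1 (σ.2 ⟨_, ActsByAut.map_smul_mem_edgeSet g⁻¹ e⟩)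
  rwa [← h, smul_inv_smul]

instance instSMul : SMul G (GraphOri Γ) where
  smul g σ := ⟨fun e => g • σ.1 ⟨_, ActsByAut.map_smul_mem_edgeSet g⁻¹ e⟩, smul_apply_mem g σ⟩

theorem dirAdj_smul_iff {g : G} {σ : GraphOri Γ} {u v : V} :
    dirAdj Γ (g • σ) u v ↔ dirAdj Γ σ (g⁻¹ • u) (g⁻¹ • v) := by
  by_cases h : Γ.Adj u v
  · rw [dirAdj_iff_apply_eq (e := ⟨s(u, v), h⟩) rfl,
      dirAdj_iff_apply_eq (e := ⟨_, ActsByAut.map_smul_mem_edgeSet g⁻¹ ⟨s(u, v), h⟩⟩) rfl]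
    exact smul_eq_iff_eq_inv_smul g
  · exact iff_of_false (fun h' => h h'.1) fun h' => h ((ActsByAut.adj_smul_iff g⁻¹).1 h'.1)

instance instMulAction : MulAction G (GraphOri Γ) where
  one_smul σ := ext_dirAdj fun u v h => by
    simpa only [dirAdj_smul_iff, inv_one, one_smul] using h
  mul_smul g h σ := ext_dirAdj fun u v huv => by
    simpa only [dirAdj_smul_iff, mul_inv_rev, mul_smul] using huv

theorem smul_eq_iff_oriSMulEq {g : G} {σ σ' : GraphOri Γ} :
    g • σ = σ' ↔ oriSMulEq Γ ActsByAut.adj_smul g σ σ' := by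
  refine ⟨fun h u v huv => h ▸ rfl, fun h => Subtype.ext (funext fun ⟨e, he⟩ => ?_)⟩
  induction e with
  | _ u v => exact (h u v he).symm

theorem transGen_dirAdj_smul {g : G} {σ : GraphOri Γ} (hg : g • σ = σ) {u v : V}
    (h : Relation.TransGen (dirAdj Γ σ) u v) :
    Relation.TransGen (dirAdj Γ σ) (g • u) (g • v) := by
  refine h.lift (g • ·) fun x y hxy => ?_
  have hxy' : dirAdj Γ (g • σ) (g • x) (g • y) := by
    rwa [dirAdj_smul_iff, inv_smul_smul, inv_smul_smul]
  rwa [hg] at hxy'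

theorem ofColoring_smul {α : Type*} [LinearOrder α] (g : G) (c : Γ.Coloring α) :
    ofColoring (g • c) = g • ofColoring c :=
  ofColoring_eq_iff.2 fun _ _ h => lt_of_dirAdj_ofColoring (c := c) (dirAdj_smul_iff.1 h)

end GraphOri

variable (G Γ) in
/-- The `G`-set of acyclic orientations of `Γ`. -/
def acyclicOri : SubMulAction G (GraphOri Γ) where
  carrier := {σ | oriAcyclic Γ σ}
  smul_mem' g _ hσ v h := hσ (g⁻¹ • v) (h.lift (g⁻¹ • ·) fun _ _ => GraphOri.dirAdj_smul_iff.1)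

end ActsByAut

section FixedColorings

open GraphOri

variable {V G : Type*} [Group G] [MulAction G V] {Γ : SimpleGraph V} [ActsByAut G Γ]

theorem smul_eq_of_mem_zpowers {X : Type*} [MulAction G X] {g k : G} {x : X} (hg : g • x = x)
    (hk : k ∈ Subgroup.zpowers g) : k • x = x :=
  (Subgroup.zpowers_le.2 hg : Subgroup.zpowers g ≤ stabilizer G x) hk

theorem wellFounded_quotDirRel [Finite V] {g : G} {σ : GraphOri Γ} (hσ : oriAcyclic Γ σ)
    (hg : g • σ = σ) : WellFounded (quotDirRel Γ g σ) := by
  have acc_mk (v : V) : Acc (quotDirRel Γ g σ) (Quotient.mk _ v) := by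
    induction v using hσ.wellFounded_transGen.induction with
    | _ v ih =>
    refine ⟨_, fun a ⟨u, v', hu, hv, huv⟩ => ?_⟩
    obtain ⟨⟨k, hk⟩, hkv : k • v = v'⟩ := Quotient.exact hv
    have huv' := transGen_dirAdj_smul (smul_eq_of_mem_zpowers hg (inv_mem hk)) huv
    rw [← hkv, inv_smul_smul] at huv'
    rw [← hu, ← Quotient.sound (s := orbitRel (Subgroup.zpowers g) V)
      ⟨⟨k⁻¹, inv_mem hk⟩, rfl⟩]
    exact ih _ huv'
  exact ⟨Quotient.ind acc_mk⟩

/-- A coloring fixed by `g` descends to the `⟨g⟩`-orbits of vertices, and it induces the orientation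
`σ` exactly when it increases along the arrows of `σ`. -/
def fixedColoringsEquivStrictLabeling (g : G) (σ : GraphOri Γ) (n : ℕ) :
    {c : fixedBy (Γ.Coloring (Fin n)) g // ofColoring c.1 = σ} ≃
      StrictLabeling (quotDirRel Γ g σ) n where
  toFun c :=
    { toFun := Quotient.lift c.1.1 fun u v ⟨⟨k, hk⟩, (hu : k • v = u)⟩ => by
        have hc := smul_eq_of_mem_zpowers c.1.2 hk
        rw [← hu, ← DFunLike.congr_fun hc (k • v), ActsByAut.coloring_smul_apply, inv_smul_smul]
      map_rel' := by
        rintro _ _ ⟨u, v, rfl, rfl, huv⟩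
        exact lt_of_transGen_dirAdj (c := c.1.1) (ofColoring_eq_iff.1 c.2) huv }
  invFun f :=
    have hlt (u v : V) (h : dirAdj Γ σ u v) : f (Quotient.mk _ u) < f (Quotient.mk _ v) :=
      f.map_rel ⟨u, v, rfl, rfl, .single h⟩
    let c : Γ.Coloring (Fin n) := SimpleGraph.Coloring.mk (fun v => f (Quotient.mk _ v))
      fun h => (dirAdj_or_dirAdj σ h).elim (fun h => (hlt _ _ h).ne) fun h => (hlt _ _ h).ne'
    have hc : g • c = c := by
      ext v
      exact congrArg (fun a => (f a : ℕ))
        (Quotient.sound ⟨⟨g⁻¹, inv_mem (Subgroup.mem_zpowers g)⟩, rfl⟩)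
    ⟨⟨c, hc⟩, ofColoring_eq_iff.2 hlt⟩
  left_inv _ := rfl
  right_inv f := by
    ext a
    induction a using Quotient.ind
    rfl

theorem card_fixedBy_coloring [Finite V] (g : G) [Fintype (fixedBy (acyclicOri G Γ) g)] (n : ℕ) :
    Nat.card (fixedBy (Γ.Coloring (Fin n)) g) =
      ∑ σ : fixedBy (acyclicOri G Γ) g, Nat.card (StrictLabeling (quotDirRel Γ g σ.1.1) n) := by
  let toOri (c : fixedBy (Γ.Coloring (Fin n)) g) : fixedBy (acyclicOri G Γ) g :=
    ⟨⟨ofColoring c.1, oriAcyclic_ofColoring c.1⟩,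
      Subtype.ext ((ofColoring_smul g c.1).symm.trans (congrArg ofColoring c.2))⟩
  have fiberEquiv (σ : fixedBy (acyclicOri G Γ) g) :
      {c // toOri c = σ} ≃ StrictLabeling (quotDirRel Γ g σ.1.1) n :=
    (Equiv.subtypeEquivRight fun _ => Subtype.ext_iff.trans Subtype.ext_iff).trans
      (fixedColoringsEquivStrictLabeling g σ.1.1 n)
  have (σ : fixedBy (acyclicOri G Γ) g) : Finite (StrictLabeling (quotDirRel Γ g σ.1.1) n) :=
    DFunLike.finite _
  rw [Nat.card_congr ((Equiv.sigmaFiberEquiv toOri).symm.trans (Equiv.sigmaCongrRight fiberEquiv)),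
    Nat.card_sigma]

variable (Γ) in
theorem exists_polynomial_card_fixedBy_coloring [Fintype V] [DecidableEq V] (g : G) :
    ∃ P : ℚ[X], (∀ n : ℕ, P.eval (n : ℚ) = Nat.card (fixedBy (Γ.Coloring (Fin n)) g)) ∧
      P.eval (-1) = (-1) ^ Fintype.card V *
        ((Equiv.Perm.sign (toPerm g : Equiv.Perm V) : ℤ) *
          Nat.card (fixedBy (acyclicOri G Γ) g) : ℤ) := by
  classical
  have := Fintype.ofFinite (fixedBy (acyclicOri G Γ) g)
  choose P hP hP_neg using fun σ : fixedBy (acyclicOri G Γ) g =>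
    exists_strictOrderPolynomial (wellFounded_quotDirRel σ.1.2 (congrArg Subtype.val σ.2))
  have h_sign := congrArg (fun ε : ℤˣ => ((ε : ℤ) : ℚ))
    (neg_one_pow_card_orbits_zpowers (V := V) g)
  push_cast at h_sign
  refine ⟨∑ σ, P σ, fun n => ?_, ?_⟩
  · rw [eval_finsetSum, card_fixedBy_coloring]
    push_cast
    exact Finset.sum_congr rfl fun σ _ => hP σ n
  · rw [eval_finsetSum, Finset.sum_congr rfl fun σ _ => hP_neg σ, Finset.sum_const,
      Finset.card_univ, nsmul_eq_mul, ← Nat.card_eq_fintype_card, h_sign]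
    push_cast
    ring

end FixedColorings

section OrbitalChromaticPolynomial

variable {G V : Type*} [Group G] [MulAction G V]

variable (G V) in
/-- The character of `G` given by the signs of the permutations of `V`. -/
def toPermSign [Fintype V] [DecidableEq V] : G →* ℤˣ :=
  Equiv.Perm.sign.comp (toPermHom G V)

theorem toPermSign_injective [Fintype V] [DecidableEq V] {τ : G} (hG : ∀ g : G, g = 1 ∨ g = τ)
    (hsgn : Equiv.Perm.sign (toPerm τ : Equiv.Perm V) = -1) :
    Function.Injective (toPermSign G V) := by
  refine (injective_iff_map_eq_one _).2 fun g hg => (hG g).resolve_right ?_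
  rintro rfl
  exact absurd (hg.symm.trans hsgn) (by decide)

variable (Γ : SimpleGraph V) [ActsByAut G Γ]

theorem card_quot_coloring (α : Type*) :
    Nat.card (Quot fun c c' : {c : V → α // ∀ u v : V, Γ.Adj u v → c u ≠ c v} =>
      ∃ g : G, ∀ x : V, c'.1 x = c.1 (g⁻¹ • x)) =
      Nat.card (orbitRel.Quotient G (Γ.Coloring α)) := by
  let e : {c : V → α // ∀ u v : V, Γ.Adj u v → c u ≠ c v} ≃ Γ.Coloring α :=
    { toFun := fun c => SimpleGraph.Coloring.mk c.1 fun {u v} => c.2 u v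
      invFun := fun c => ⟨c, fun _ _ => c.valid⟩
      left_inv := fun _ => rfl
      right_inv := fun _ => rfl }
  refine Nat.card_congr (Quot.congr e fun c c' => ?_)
  calc (∃ g : G, ∀ x : V, c'.1 x = c.1 (g⁻¹ • x))
    _ ↔ ∃ g : G, g • e c = e c' :=
      exists_congr fun g =>
        ⟨fun h => RelHom.ext fun x => (h x).symm, fun h x => DFunLike.congr_fun h.symm x⟩
    _ ↔ orbitRel G (Γ.Coloring α) (e c) (e c') := (orbitRel G (Γ.Coloring α)).comm'

theorem card_evenPoints_acyclicOri [Fintype V] [DecidableEq V] :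
    Nat.card (evenPoints (toPermSign G V) (acyclicOri G Γ)) =
      Nat.card {σ : GraphOri Γ // oriAcyclic Γ σ ∧
        ∀ g : G, oriSMulEq Γ ActsByAut.adj_smul g σ σ →
          Equiv.Perm.sign (toPerm g : Equiv.Perm V) = 1} := by
  refine Nat.card_congr ((Equiv.subtypeEquivRight fun σ => ?_).trans
    (Equiv.subtypeSubtypeEquivSubtypeInter _ _))
  refine forall_congr' fun g => imp_congr_left ?_
  exact Subtype.ext_iff.trans GraphOri.smul_eq_iff_oriSMulEq

theorem stmt_16_general [Fintype V] [DecidableEq V] [Finite G] (p : ℚ[X])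
    (hp : ∀ n : ℕ, 1 ≤ n →
      p.eval (n : ℚ) = Nat.card (orbitRel.Quotient G (Γ.Coloring (Fin n)))) :
    p.eval (-1) = (-1) ^ Fintype.card V *
      Nat.card (orbitRel.Quotient G (evenPoints (toPermSign G V) (acyclicOri G Γ))) := by
  have := Fintype.ofFinite G
  choose P hP hP_neg using exists_polynomial_card_fixedBy_coloring (G := G) Γ
  have h_sum : (Nat.card G : ℚ[X]) * p = ∑ g, P g := by
    refine Polynomial.eq_of_infinite_eval_eq _ _
      (((Set.Ici_infinite 1).image Nat.cast_injective.injOn).mono ?_)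
    rintro _ ⟨n, hn, rfl⟩
    rw [Set.mem_ofPred_eq, eval_mul, eval_natCast, hp n hn, eval_finsetSum,
      Finset.sum_congr rfl fun g _ => hP g n]
    exact_mod_cast card_mul_card_orbits (G := G) (Γ.Coloring (Fin n))
  have h_eval : Nat.card G * p.eval (-1) = (-1) ^ Fintype.card V *
      (Nat.card G *
        Nat.card (orbitRel.Quotient G (evenPoints (toPermSign G V) (acyclicOri G Γ)))) := by
    have h_burnside := congrArg (Int.cast : ℤ → ℚ)
      (sum_units_mul_card_fixedBy (acyclicOri G Γ) (toPermSign G V))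
    push_cast at h_burnside
    rw [← h_burnside, ← eval_natCast, ← eval_mul, h_sum, eval_finsetSum,
      Finset.sum_congr rfl fun g _ => hP_neg g, ← Finset.mul_sum]
    push_cast
    rfl
  have hG : (Nat.card G : ℚ) ≠ 0 := Nat.cast_ne_zero.2 Nat.card_pos.ne'
  rw [mul_left_comm] at h_eval
  exact mul_left_cancel₀ hG h_eval

end OrbitalChromaticPolynomial

/-- Let `Γ` be a finite simple graph and let `Z₂ = {e,τ}` act on `Γ` by
automorphisms with `sgn(τ) = -1` as permutation of the vertices.  Let `χ_{Γ,Z₂}` be the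
polynomial with `χ_{Γ,Z₂}(n) = |Col_n(Γ)/Z₂|` for all `n ≥ 1`.  Then
`χ_{Γ,Z₂}(-1) = (-1)^{|V|} · |Σ₊|/2`, where `Σ₊` is the set of even acyclic orientations
of `Γ` (those all of whose stabilizing group elements have sign `+1`). -/
theorem stmt_16 {V G : Type*} [Fintype V] [DecidableEq V] [Group G] [Fintype G]
    [MulAction G V] (Γ : SimpleGraph V)
    (hact : ∀ (g : G) (u v : V), Γ.Adj u v → Γ.Adj (g • u) (g • v))
    (τ : G) (hτ : τ ≠ 1) (hG : ∀ g : G, g = 1 ∨ g = τ)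
    (hsgn : Equiv.Perm.sign (MulAction.toPerm τ : Equiv.Perm V) = -1)
    (p : Polynomial ℚ)
    (hp : ∀ n : ℕ, 1 ≤ n →
      p.eval (n : ℚ) =
        Nat.card (Quot (fun c c' : {c : V → Fin n // ∀ u v : V, Γ.Adj u v → c u ≠ c v} =>
          ∃ g : G, ∀ x : V, c'.1 x = c.1 (g⁻¹ • x)))) :
    p.eval (-1 : ℚ) = (-1) ^ (Fintype.card V) *
      (Nat.card {σ : GraphOri Γ // oriAcyclic Γ σ ∧
        ∀ g : G, oriSMulEq Γ hact g σ σ →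
          Equiv.Perm.sign (MulAction.toPerm g : Equiv.Perm V) = 1} : ℚ) / 2 := by
  have : ActsByAut G Γ := ⟨hact⟩
  have h_card : Nat.card G = 2 := (Nat.card_eq_two_iff' 1).2 ⟨τ, hτ, fun g => (hG g).resolve_left⟩
  have h_even :=
    card_evenPoints_of_injective (X := acyclicOri G Γ) (toPermSign_injective (V := V) hG hsgn)
  rw [stmt_16_general Γ p fun n hn => by rw [hp n hn, card_quot_coloring],
    ← card_evenPoints_acyclicOri Γ, h_even, h_card]
  push_cast
  ring
end

section
/- (Stanley's reciprocity for graph colorings) Let Γ be a finite simple graph and χ_Γ its chromatic polynomial. Then for all integers n ≥ 1, |χ_Γ(-n)| equals the number of weakly compatible pairs (c,σ) consisting of an n-coloring c and an acyclic orientation σ of Γ. In particular, |χ_Γ(-1)| equals the number of acyclic orientations of Γ. -/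
/-!
Let `χ_G(n)` and `W_G(n)` count the proper `n`-colorings of `G` and the weakly compatible pairs with
`n` colors. Removing the class of the smallest color gives `χ_G(n + 1) = ∑ χ_{G - T}(n)`, where `T`
runs over the independent sets of `G`. In a weakly compatible pair the smallest color is used if and
only if it is used on some source, so inclusion-exclusion over sets `T` of such sources gives
`W_G(n) = ∑ (-1)^|T| W_{G - T}(n + 1)`. Hence `χ_G(m)` for `m ≥ 0` and `(-1)^|V| W_G(-m)` for
`m ≤ 0` form one function on `ℤ` with one recursion. Its difference only involves the graphs
`G - T` with `T ≠ ∅`, so its `(|V| + 1)`-st difference vanishes, and such a function is determined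
by its values at positive integers.
-/

open Finset Relation
open scoped fwdDiff

namespace GraphOri

variable {V : Type*} {Γ : SimpleGraph V} {σ : GraphOri Γ} {r : V → V → Prop} {u v : V}

lemma dirAdj_iff (h : Γ.Adj u v) :
    dirAdj Γ σ u v ↔ σ.1 ⟨s(u, v), Γ.mem_edgeSet.mpr h⟩ = v :=
  exists_prop_of_true h

lemma dirAdj_swap_iff (h : Γ.Adj u v) :
    dirAdj Γ σ v u ↔ σ.1 ⟨s(u, v), Γ.mem_edgeSet.mpr h⟩ = u := by
  simp only [dirAdj_iff h.symm, Sym2.eq_swap (a := v)]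

lemma dirAdj_or_dirAdj (σ : GraphOri Γ) (h : Γ.Adj u v) : dirAdj Γ σ u v ∨ dirAdj Γ σ v u := by
  rw [dirAdj_iff h, dirAdj_swap_iff h, or_comm]
  exact Sym2.mem_iff.mp (σ.2 ⟨s(u, v), Γ.mem_edgeSet.mpr h⟩)

lemma dirAdj_asymm (h : dirAdj Γ σ u v) : ¬ dirAdj Γ σ v u := by
  obtain ⟨huv, hv⟩ := h
  rw [dirAdj_swap_iff huv, hv]
  exact huv.ne'

lemma dirAdj_injective : Function.Injective (dirAdj Γ) := by
  intro σ τ h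
  refine Subtype.ext (funext ?_)
  rintro ⟨⟨u, v⟩, he⟩
  have huv : Γ.Adj u v := he
  rcases dirAdj_or_dirAdj σ huv with hσ | hσ
  · have hτ : dirAdj Γ τ u v := h ▸ hσ
    exact ((dirAdj_iff huv).mp hσ).trans ((dirAdj_iff huv).mp hτ).symm
  · have hτ : dirAdj Γ τ v u := h ▸ hσ
    exact ((dirAdj_swap_iff huv).mp hσ).trans ((dirAdj_swap_iff huv).mp hτ).symm

lemma exists_dirAdj_eq (hadj : ∀ {u v}, r u v → Γ.Adj u v)
    (htotal : ∀ {u v}, Γ.Adj u v → r u v ∨ r v u) (hasymm : ∀ {u v}, r u v → ¬ r v u) :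
    ∃ σ : GraphOri Γ, dirAdj Γ σ = r := by
  have exists_arc (e : Γ.edgeSet) : ∃ v u, (e : Sym2 V) = s(u, v) ∧ r u v := by
    obtain ⟨⟨u, v⟩, he⟩ := e
    rcases htotal he with h | h
    · exact ⟨v, u, rfl, h⟩
    · exact ⟨u, v, Sym2.eq_swap, h⟩
  choose head tail heq hr using exists_arc
  let σ : GraphOri Γ := ⟨head, fun e => heq e ▸ Sym2.mem_mk_right _ _⟩
  refine ⟨σ, funext fun u => funext fun v => propext ⟨?_, fun h => ?_⟩⟩
  · rintro ⟨h, hhead : head _ = v⟩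
    have htail := heq ⟨_, Γ.mem_edgeSet.mpr h⟩
    rw [hhead, Sym2.congr_left] at htail
    simpa only [← htail, hhead] using hr ⟨_, Γ.mem_edgeSet.mpr h⟩
  · rw [dirAdj_iff (hadj h)]
    rcases Sym2.eq_iff.mp (heq ⟨_, Γ.mem_edgeSet.mpr (hadj h)⟩) with ⟨-, hhead⟩ | ⟨htail, hhead⟩
    · exact hhead.symm
    · have harc := hr ⟨_, Γ.mem_edgeSet.mpr (hadj h)⟩
      rw [← htail, ← hhead] at harc
      exact absurd harc (hasymm h)

lemma oriAcyclic_iff_wellFounded [Finite V] : oriAcyclic Γ σ ↔ WellFounded (dirAdj Γ σ) := by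
  refine ⟨fun h => ?_, fun h v => h.transGen.irrefl.irrefl v⟩
  have : Std.Irrefl (TransGen (dirAdj Γ σ)) := ⟨h⟩
  exact (Finite.wellFounded_of_trans_of_irrefl (TransGen (dirAdj Γ σ))).mono fun _ _ => .single

lemma weakCompat_iff {n : ℕ} {c : V → Fin n} :
    weakCompat Γ c σ ↔ ∀ u v, dirAdj Γ σ u v → c u ≤ c v := by
  constructor
  · intro h u v huv
    by_contra! hlt
    exact dirAdj_asymm huv ⟨huv.1.symm, h v u huv.1.symm hlt⟩
  · intro h u v huv hlt
    have hvu : ¬ dirAdj Γ σ v u := fun hvu => (h v u hvu).not_gt hlt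
    exact (dirAdj_iff huv).mp ((dirAdj_or_dirAdj σ huv).resolve_right hvu)

end GraphOri

/-- A coloring of `G` together with a weakly compatible acyclic orientation, the latter encoded by
its arc relation. Acyclicity is expressed by well-foundedness of that relation, which for finite
`V` amounts to the absence of directed cycles. -/
@[ext]
structure WeakPair {V : Type*} (G : SimpleGraph V) (n : ℕ) where
  color : V → Fin n
  arc : V → V → Prop
  adj {u v : V} : arc u v → G.Adj u v
  total {u v : V} : G.Adj u v → arc u v ∨ arc v u
  wellFounded : WellFounded arc
  color_le {u v : V} : arc u v → color u ≤ color v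

namespace WeakPair

variable {V : Type*} {G : SimpleGraph V} {n : ℕ}

instance [Finite V] : Finite (WeakPair G n) :=
  Finite.of_injective (fun x => (x.color, x.arc)) fun _ _ h =>
    WeakPair.ext (congrArg Prod.fst h) (congrArg Prod.snd h)

/-- The `WeakPair` given by a coloring and an orientation. -/
noncomputable def equivGraphOri [Finite V] :
    {x : (V → Fin n) × GraphOri G // oriAcyclic G x.2 ∧ weakCompat G x.1 x.2} ≃ WeakPair G n :=
  Equiv.ofBijective
    (fun x =>
      { color := x.1.1
        arc := dirAdj G x.1.2
        adj := fun h => h.1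
        total := GraphOri.dirAdj_or_dirAdj x.1.2
        wellFounded := GraphOri.oriAcyclic_iff_wellFounded.mp x.2.1
        color_le := GraphOri.weakCompat_iff.mp x.2.2 _ _ }) <| by
    constructor
    · intro x y h
      obtain ⟨hcolor, harc⟩ := WeakPair.ext_iff.mp h
      exact Subtype.ext (Prod.ext hcolor (GraphOri.dirAdj_injective harc))
    · intro x
      obtain ⟨σ, hσ⟩ := GraphOri.exists_dirAdj_eq x.adj x.total (x.wellFounded.asymmetric _ _)
      refine ⟨⟨(x.color, σ), ?_, ?_⟩, WeakPair.ext rfl hσ⟩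
      · exact GraphOri.oriAcyclic_iff_wellFounded.mpr (hσ ▸ x.wellFounded)
      · exact GraphOri.weakCompat_iff.mpr (hσ ▸ fun _ _ => x.color_le)

/-- The sources of the orientation that have the smallest color. -/
def bottomSources (x : WeakPair G (n + 1)) : Set V :=
  {v | x.color v = 0 ∧ ∀ u, ¬ x.arc u v}

lemma isIndepSet_bottomSources (x : WeakPair G (n + 1)) : G.IsIndepSet x.bottomSources :=
  fun u hu v hv _ huv => (x.total huv).elim (hv.2 u) (hu.2 v)

lemma bottomSources_eq_empty_iff (x : WeakPair G (n + 1)) :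
    x.bottomSources = ∅ ↔ ∀ v, x.color v ≠ 0 := by
  constructor
  · intro hempty v hv
    obtain ⟨m, hm, hmin⟩ := x.wellFounded.has_min {v | x.color v = 0} ⟨v, hv⟩
    refine Set.eq_empty_iff_forall_notMem.mp hempty m ⟨hm, fun u hu => hmin u ?_ hu⟩
    exact Fin.le_zero_iff.mp (hm ▸ x.color_le hu)
  · exact fun h => Set.eq_empty_of_forall_notMem fun v hv => h v hv.1

/-- Weakly compatible pairs that avoid the smallest color use one color fewer. -/
def equivColorNeZero :
    {x : WeakPair G (n + 1) // ∀ v, x.color v ≠ 0} ≃ WeakPair G n where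
  toFun x :=
    { x.1 with
      color := fun v => (x.1.color v).pred (x.2 v)
      color_le := fun h => Fin.pred_le_pred_iff.mpr (x.1.color_le h) }
  invFun y :=
    ⟨{ y with
        color := fun v => (y.color v).succ
        color_le := fun h => Fin.succ_le_succ_iff.mpr (y.color_le h) },
      fun v => Fin.succ_ne_zero _⟩
  left_inv x := by ext <;> simp
  right_inv y := by ext <;> simp

/-- The pullback of a weakly compatible pair along a graph embedding. -/
def comap {W : Type*} {H : SimpleGraph W} (f : H ↪g G) (x : WeakPair G n) : WeakPair H n where
  color := x.color ∘ f
  arc u v := x.arc (f u) (f v)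
  adj h := f.map_adj_iff.mp (x.adj h)
  total h := x.total (f.map_adj_iff.mpr h)
  wellFounded := InvImage.wf f x.wellFounded
  color_le := x.color_le

/-- Isomorphic graphs have the same weakly compatible pairs. -/
def equivOfIso {W : Type*} {H : SimpleGraph W} (e : G ≃g H) : WeakPair G n ≃ WeakPair H n where
  toFun := comap e.symm
  invFun := comap e
  left_inv x := by ext <;> simp [comap]
  right_inv y := by ext <;> simp [comap]

open Classical in
/-- Adds the vertices of an independent set `T` as sources of the smallest color. -/
noncomputable def extend {T : Set V} (hT : G.IsIndepSet T)
    (y : WeakPair (G.induce Tᶜ) (n + 1)) : WeakPair G (n + 1) where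
  color v := if h : v ∈ T then 0 else y.color ⟨v, h⟩
  arc u v := G.Adj u v ∧ ∃ hv : v ∉ T, ∀ hu : u ∉ T, y.arc ⟨u, hu⟩ ⟨v, hv⟩
  adj h := h.1
  total {u v} huv := by
    by_cases hu : u ∈ T <;> by_cases hv : v ∈ T
    · exact absurd huv (hT hu hv huv.ne)
    · exact .inl ⟨huv, hv, fun h => absurd hu h⟩
    · exact .inr ⟨huv.symm, hu, fun h => absurd hv h⟩
    · exact (y.total (u := ⟨u, hu⟩) (v := ⟨v, hv⟩) huv).imp
        (fun h => ⟨huv, hv, fun _ => h⟩) (fun h => ⟨huv.symm, hu, fun _ => h⟩)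
  wellFounded := by
    set r : V → V → Prop :=
      fun u v => G.Adj u v ∧ ∃ hv : v ∉ T, ∀ hu : u ∉ T, y.arc ⟨u, hu⟩ ⟨v, hv⟩
    have acc_of_mem (v : V) (hv : v ∈ T) : Acc r v := ⟨_, fun u hu => absurd hv hu.2.1⟩
    have acc_of_notMem (v : (Tᶜ : Set V)) : Acc r v := by
      induction v using y.wellFounded.induction with
      | _ v ih =>
        refine ⟨_, fun u ⟨_, _, harc⟩ => ?_⟩
        by_cases hu : u ∈ T
        · exact acc_of_mem u hu
        · exact ih ⟨u, hu⟩ (harc hu)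
    exact ⟨fun v => if hv : v ∈ T then acc_of_mem v hv else acc_of_notMem ⟨v, hv⟩⟩
  color_le {u v} := by
    rintro ⟨-, hv, harc⟩
    by_cases hu : u ∈ T
    · simp [hu]
    · simpa [hu, hv] using y.color_le (harc hu)

/-- Deleting a set `T` of sources of the smallest color. -/
noncomputable def equivSubsetBottomSources {T : Set V} (hT : G.IsIndepSet T) :
    {x : WeakPair G (n + 1) // T ⊆ x.bottomSources} ≃ WeakPair (G.induce Tᶜ) (n + 1) where
  toFun x := x.1.comap (.induce Tᶜ)
  invFun y := ⟨y.extend hT, fun v hv => ⟨dif_pos hv, fun _ harc => harc.2.1 hv⟩⟩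
  left_inv := by
    rintro ⟨x, hx⟩
    refine Subtype.ext (WeakPair.ext ?_ ?_)
    · funext v
      by_cases hv : v ∈ T
      · exact (dif_pos hv).trans (hx hv).1.symm
      · exact dif_neg hv
    · ext u v
      constructor
      · rintro ⟨huv, _, harc⟩
        by_cases hu : u ∈ T
        · exact (x.total huv).resolve_right ((hx hu).2 v)
        · exact harc hu
      · exact fun harc => ⟨x.adj harc, fun hv => (hx hv).2 u harc, fun _ => harc⟩
  right_inv y := by
    refine WeakPair.ext ?_ ?_
    · funext v
      exact dif_neg v.2
    · ext u v
      exact ⟨fun h => h.2.2 u.2, fun h => ⟨y.adj h, v.2, fun _ => h⟩⟩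

end WeakPair

section Coloring

variable {V : Type*} {G : SimpleGraph V} {n : ℕ} {T : Set V}

/-- Proper colorings as functions that separate adjacent vertices. -/
def equivProperColoring (G : SimpleGraph V) (α : Type*) :
    {c : V → α // ∀ u v, G.Adj u v → c u ≠ c v} ≃ G.Coloring α where
  toFun c := .mk c.1 (c.2 _ _)
  invFun c := ⟨c, fun _ _ => c.valid⟩

open Classical in
/-- Extends a coloring of the complement of an independent set `T` by a new smallest color,
which is used exactly on `T`. -/
noncomputable def extendColoring (hT : G.IsIndepSet T) (d : (G.induce Tᶜ).Coloring (Fin n)) :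
    G.Coloring (Fin (n + 1)) :=
  .mk (fun v => if h : v ∈ T then 0 else (d ⟨v, h⟩).succ) fun {u v} huv => by
    by_cases hu : u ∈ T <;> by_cases hv : v ∈ T
    · exact absurd huv (hT hu hv huv.ne)
    · simpa [hu, hv] using (Fin.succ_ne_zero _).symm
    · simp [hu, hv]
    · simpa [hu, hv] using d.valid (v := ⟨u, hu⟩) (w := ⟨v, hv⟩) huv

lemma extendColoring_of_mem (hT : G.IsIndepSet T) (d : (G.induce Tᶜ).Coloring (Fin n)) {v : V}
    (hv : v ∈ T) : extendColoring hT d v = 0 :=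
  dif_pos hv

lemma extendColoring_of_notMem (hT : G.IsIndepSet T) (d : (G.induce Tᶜ).Coloring (Fin n)) {v : V}
    (hv : v ∉ T) : extendColoring hT d v = (d ⟨v, hv⟩).succ :=
  dif_neg hv

lemma extendColoring_ne_zero (hT : G.IsIndepSet T) (d : (G.induce Tᶜ).Coloring (Fin n)) {v : V}
    (hv : v ∉ T) : extendColoring hT d v ≠ 0 :=
  extendColoring_of_notMem hT d hv ▸ Fin.succ_ne_zero _

lemma colorClass_extendColoring (hT : G.IsIndepSet T) (d : (G.induce Tᶜ).Coloring (Fin n)) :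
    (extendColoring hT d).colorClass 0 = T := by
  ext v
  refine ⟨fun h => ?_, extendColoring_of_mem hT d⟩
  by_contra hv
  exact extendColoring_ne_zero hT d hv h

/-- Colorings whose smallest color class is `T` are colorings of the complement of `T` with one
color fewer. -/
noncomputable def equivColorClassZero (hT : G.IsIndepSet T) :
    {c : G.Coloring (Fin (n + 1)) // c.colorClass 0 = T} ≃ (G.induce Tᶜ).Coloring (Fin n) where
  toFun c := .mk (fun v => (c.1 v).pred fun h => v.2 (c.2.subset h)) fun {u v} huv h =>
    c.1.valid huv (Fin.pred_inj.mp h)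
  invFun d := ⟨extendColoring hT d, colorClass_extendColoring hT d⟩
  left_inv := by
    rintro ⟨c, rfl⟩
    refine Subtype.ext (DFunLike.ext _ _ fun v => ?_)
    by_cases hv : v ∈ c.colorClass 0
    · exact (extendColoring_of_mem hT _ hv).trans hv.symm
    · exact (extendColoring_of_notMem hT _ hv).trans (Fin.succ_pred (c v) hv)
  right_inv d := DFunLike.ext _ _ fun v =>
    (Fin.pred_eq_iff_eq_succ (extendColoring_ne_zero hT d v.2)).mpr
      (extendColoring_of_notMem hT d v.2)

end Coloring

section Recursions

variable {V : Type*} [Fintype V]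

lemma card_eq_empty_eq_sum_card_subset {α : Type*} [Finite α] (f : α → Finset V) :
    (Nat.card {x // f x = ∅} : ℤ) =
      ∑ T : Finset V, (-1) ^ #T * (Nat.card {x // T ⊆ f x} : ℤ) := by
  classical
  have := Fintype.ofFinite α
  have h := inclusion_exclusion_card_inf_compl univ fun v => ({x | v ∈ f x} : Finset α)
  have inf_compl_eq : (univ.inf fun v => ({x | v ∈ f x} : Finset α)ᶜ) =
      ({x | f x = ∅} : Finset α) := by
    ext x
    simp [Finset.mem_inf, Finset.eq_empty_iff_forall_notMem]
  have inf_eq (T : Finset V) : (T.inf fun v => ({x | v ∈ f x} : Finset α)) =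
      ({x | T ⊆ f x} : Finset α) := by
    ext x
    simp [Finset.mem_inf, Finset.subset_iff]
  simpa only [inf_compl_eq, inf_eq, powerset_univ, ← Fintype.card_subtype,
    ← Nat.card_eq_fintype_card] using h

open Classical in
/-- The family of independent vertex sets of `G`. -/
noncomputable def indepSets (G : SimpleGraph V) : Finset (Finset V) :=
  univ.filter fun T => G.IsIndepSet (T : Set V)

lemma mem_indepSets {G : SimpleGraph V} {T : Finset V} :
    T ∈ indepSets G ↔ G.IsIndepSet (T : Set V) := by
  simp [indepSets]

variable (G : SimpleGraph V) (n : ℕ)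

theorem card_weakPair_eq_sum :
    (Nat.card (WeakPair G n) : ℤ) = ∑ T ∈ indepSets G,
      (-1) ^ #T * (Nat.card (WeakPair (G.induce (T : Set V)ᶜ) (n + 1)) : ℤ) := by
  classical
  have h := card_eq_empty_eq_sum_card_subset
    fun x : WeakPair G (n + 1) => x.bottomSources.toFinset
  simp only [Set.toFinset_eq_empty, WeakPair.bottomSources_eq_empty_iff, Set.subset_toFinset,
    Nat.card_congr WeakPair.equivColorNeZero] at h
  rw [h, indepSets, sum_filter]
  refine sum_congr rfl fun T _ => ?_
  split_ifs with hT
  · rw [Nat.card_congr (WeakPair.equivSubsetBottomSources hT)]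
  · have : IsEmpty {x : WeakPair G (n + 1) // (T : Set V) ⊆ x.bottomSources} :=
      ⟨fun x => hT (x.1.isIndepSet_bottomSources.mono x.2)⟩
    simp

theorem card_coloring_succ :
    Nat.card (G.Coloring (Fin (n + 1))) = ∑ T ∈ indepSets G,
      Nat.card ((G.induce (T : Set V)ᶜ).Coloring (Fin n)) := by
  classical
  rw [Nat.card_congr (Equiv.sigmaFiberEquiv
    fun c : G.Coloring (Fin (n + 1)) => (c.colorClass 0).toFinset).symm, Nat.card_sigma,
    indepSets, sum_filter]
  refine sum_congr rfl fun T _ => ?_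
  split_ifs with hT
  · rw [← Nat.card_congr (equivColorClassZero hT)]
    simp only [← Finset.coe_inj, Set.coe_toFinset]
  · have : IsEmpty {c : G.Coloring (Fin (n + 1)) // (c.colorClass 0).toFinset = T} :=
      ⟨fun c => hT (by simpa [← c.2] using c.1.isIndepSet_colorClass 0)⟩
    exact Nat.card_of_isEmpty

end Recursions

section Reciprocity

variable {V : Type*}

/-- The chromatic polynomial as a function on `ℤ`, defined without reference to a polynomial: it
counts proper `m`-colorings for `m ≥ 0` and, up to sign, weakly compatible pairs with `-m` colors
for `m < 0`. -/
noncomputable def chromaticFunction (G : SimpleGraph V) : ℤ → ℤ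
  | .ofNat n => Nat.card (G.Coloring (Fin n))
  | .negSucc n => (-1) ^ Nat.card V * Nat.card (WeakPair G (n + 1))

lemma chromaticFunction_natCast (G : SimpleGraph V) (n : ℕ) :
    chromaticFunction G n = Nat.card (G.Coloring (Fin n)) :=
  rfl

lemma card_coloring_fin_zero (G : SimpleGraph V) :
    (Nat.card (G.Coloring (Fin 0)) : ℤ) = (-1) ^ Nat.card V * Nat.card (WeakPair G 0) := by
  rcases isEmpty_or_nonempty V with hV | ⟨⟨v⟩⟩
  · have : Unique (G.Coloring (Fin 0)) :=
      { default := .mk isEmptyElim fun {v} => isEmptyElim v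
        uniq := fun _ => DFunLike.ext _ _ isEmptyElim }
    have : Unique (WeakPair G 0) :=
      { default := ⟨isEmptyElim, isEmptyElim, fun {v} => isEmptyElim v, fun {v} => isEmptyElim v,
          wellFounded_of_isEmpty _, fun {v} => isEmptyElim v⟩
        uniq := fun _ => WeakPair.ext (Subsingleton.elim _ _) (Subsingleton.elim _ _) }
    simp
  · have : IsEmpty (G.Coloring (Fin 0)) := ⟨fun c => (c v).elim0⟩
    have : IsEmpty (WeakPair G 0) := ⟨fun x => (x.color v).elim0⟩
    simp

lemma chromaticFunction_congr {W : Type*} {G : SimpleGraph V} {H : SimpleGraph W} (e : G ≃g H) :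
    chromaticFunction G = chromaticFunction H := by
  funext m
  cases m with
  | ofNat n => simp only [chromaticFunction, Nat.card_congr (SimpleGraph.coloringCongr e (.refl _))]
  | negSucc n => simp only [chromaticFunction, Nat.card_congr (WeakPair.equivOfIso e),
      Nat.card_congr e.toEquiv]

lemma chromaticFunction_neg (G : SimpleGraph V) (n : ℕ) :
    chromaticFunction G (-n) = (-1) ^ Nat.card V * Nat.card (WeakPair G n) := by
  cases n with
  | zero => exact card_coloring_fin_zero G
  | succ n => rfl

theorem chromaticFunction_add_one [Fintype V] (G : SimpleGraph V) (m : ℤ) :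
    chromaticFunction G (m + 1) =
      ∑ T ∈ indepSets G, chromaticFunction (G.induce (T : Set V)ᶜ) m := by
  cases m with
  | ofNat n =>
    change chromaticFunction G (n + 1 : ℕ) = _
    simp only [chromaticFunction_natCast, Int.ofNat_eq_natCast, card_coloring_succ G n,
      Nat.cast_sum]
  | negSucc n =>
    rw [show Int.negSucc n + 1 = -n by omega, chromaticFunction_neg, card_weakPair_eq_sum, mul_sum]
    refine sum_congr rfl fun T _ => ?_
    have hcard : Nat.card V = #T + Nat.card ((T : Set V)ᶜ : Set V) := by
      simpa using (Set.ncard_add_ncard_compl (T : Set V)).symm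
    have hsign : (-1 : ℤ) ^ #T * (-1) ^ #T = 1 := by rw [← mul_pow]; simp
    rw [chromaticFunction, hcard, pow_add]
    linear_combination (-1) ^ Nat.card ((T : Set V)ᶜ : Set V) *
      (Nat.card (WeakPair (G.induce (T : Set V)ᶜ) (n + 1)) : ℤ) * hsign

theorem fwdDiff_chromaticFunction [Fintype V] (G : SimpleGraph V) :
    Δ_[(1 : ℤ)] (chromaticFunction G) =
      ∑ T ∈ indepSets G with T.Nonempty, chromaticFunction (G.induce (T : Set V)ᶜ) := by
  classical
  have induce_compl_empty :
      chromaticFunction (G.induce ((∅ : Finset V) : Set V)ᶜ) = chromaticFunction G := by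
    rw [Finset.coe_empty, Set.compl_empty]
    exact chromaticFunction_congr (SimpleGraph.induceUnivIso G)
  have empty_mem : ∅ ∈ indepSets G := by simp [mem_indepSets]
  funext m
  rw [fwdDiff, chromaticFunction_add_one, Finset.sum_apply, ← add_sum_erase _ _ empty_mem,
    induce_compl_empty, add_sub_cancel_left]
  refine sum_congr ?_ fun _ _ => rfl
  ext T
  simp [nonempty_iff_ne_empty, and_comm]

theorem fwdDiff_iter_chromaticFunction [Finite V] (G : SimpleGraph V) {d : ℕ}
    (hd : Nat.card V < d) : (Δ_[(1 : ℤ)])^[d] (chromaticFunction G) = 0 := by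
  induction d generalizing V with
  | zero => omega
  | succ d ih =>
    have := Fintype.ofFinite V
    rw [Function.iterate_succ_apply, fwdDiff_chromaticFunction, fwdDiff_iter_finsetSum]
    refine sum_eq_zero fun T hT => ih _ ?_
    have hcard := Set.ncard_add_ncard_compl (T : Set V)
    have hpos := Finset.card_pos.mpr (mem_filter.mp hT).2
    rw [Set.ncard_coe_finset] at hcard
    rw [Nat.card_coe_set_eq]
    omega

lemma eq_zero_of_fwdDiff_iter_eq_zero {A : Type*} [AddCommGroup A] {f : ℤ → A} {d : ℕ} {a : ℤ}
    (hf : (Δ_[(1 : ℤ)])^[d] f = 0) (ha : ∀ m, a ≤ m → f m = 0) (m : ℤ) : f m = 0 := by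
  suffices h : ∀ m ≤ a, ∀ k, m ≤ k → f k = 0 from h _ (min_le_left a m) m (min_le_right a m)
  intro m hm
  induction m, hm using Int.leInductionDown with
  | base => exact ha
  | pred m _ ih =>
    intro k hk
    rcases hk.eq_or_lt with rfl | hlt
    · have hsum := congrFun hf (m - 1)
      rw [fwdDiff_iter_eq_sum_shift, sum_range_succ', sum_eq_zero] at hsum
      · rcases neg_one_pow_eq_or ℤ d with hsign | hsign <;> simpa [hsign] using hsum
      · intro j _
        rw [ih _ (by rw [nsmul_one]; push_cast; omega), smul_zero]
    · exact ih k (by omega)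

lemma fwdDiff_iter_comp_addMonoidHom {M A B : Type*} [AddCommMonoid M] [AddCommGroup A]
    [AddCommGroup B] (φ : A →+ B) (h : M) (f : M → A) (d : ℕ) :
    (Δ_[h])^[d] (φ ∘ f) = φ ∘ (Δ_[h])^[d] f := by
  ext m
  simp [fwdDiff_iter_eq_sum_shift]

lemma fwdDiff_iter_eval_intCast {R : Type*} [CommRing R] {p : Polynomial R} {d : ℕ}
    (hd : p.natDegree < d) : (Δ_[(1 : ℤ)])^[d] (fun m : ℤ => p.eval (m : R)) = 0 := by
  ext m
  have h := congrFun (Polynomial.fwdDiff_iter_eq_zero_of_degree_lt hd) (m : R)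
  simpa [fwdDiff_iter_eq_sum_shift] using h

theorem eval_eq_chromaticFunction [Finite V] {R : Type*} [CommRing R] (G : SimpleGraph V)
    {p : Polynomial R}
    (hp : ∀ n : ℕ, 1 ≤ n → p.eval (n : R) = Nat.card (G.Coloring (Fin n))) (m : ℤ) :
    p.eval (m : R) = chromaticFunction G m := by
  set d := p.natDegree + Nat.card V + 1
  let f : ℤ → R := fun m => p.eval (m : R)
  let g : ℤ → R := Int.castAddHom R ∘ chromaticFunction G
  have hf : (Δ_[(1 : ℤ)])^[d] f = 0 := fwdDiff_iter_eval_intCast (by omega)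
  have hg : (Δ_[(1 : ℤ)])^[d] g = 0 := by
    rw [fwdDiff_iter_comp_addMonoidHom, fwdDiff_iter_chromaticFunction G (by omega)]
    ext; simp
  have hfg : (Δ_[(1 : ℤ)])^[d] (f + (-1 : ℤ) • g) = 0 := by
    rw [fwdDiff_iter_add, fwdDiff_iter_const_smul, hf, hg, smul_zero, add_zero]
  have h := eq_zero_of_fwdDiff_iter_eq_zero (a := 1) hfg ?_ m
  · simpa [f, g, ← sub_eq_add_neg, sub_eq_zero] using h
  · intro m hm
    lift m to ℕ using by omega
    simp [f, g, chromaticFunction_natCast, hp m (by omega)]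

lemma card_weakCompat_fin_one (Γ : SimpleGraph V) :
    Nat.card {x : (V → Fin 1) × GraphOri Γ // oriAcyclic Γ x.2 ∧ weakCompat Γ x.1 x.2} =
      Nat.card {σ : GraphOri Γ // oriAcyclic Γ σ} :=
  Nat.card_congr
    { toFun := fun x => ⟨x.1.2, x.2.1⟩
      invFun := fun σ => ⟨(0, σ.1), σ.2, fun _ _ _ hlt => absurd hlt (lt_irrefl 0)⟩
      left_inv := fun _ => Subtype.ext (Prod.ext (Subsingleton.elim _ _) rfl) }

theorem stmt_17_general {V R : Type*} [Finite V] [CommRing R] (Γ : SimpleGraph V)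
    (p : Polynomial R)
    (hp : ∀ n : ℕ, 1 ≤ n →
      p.eval (n : R) = Nat.card {c : V → Fin n // ∀ u v : V, Γ.Adj u v → c u ≠ c v}) :
    (∀ n : ℕ, p.eval (-(n : R)) = (-1) ^ Nat.card V *
      Nat.card {x : (V → Fin n) × GraphOri Γ // oriAcyclic Γ x.2 ∧ weakCompat Γ x.1 x.2}) ∧
    p.eval (-1 : R) = (-1) ^ Nat.card V * Nat.card {σ : GraphOri Γ // oriAcyclic Γ σ} := by
  have hcoloring (n : ℕ) (hn : 1 ≤ n) : p.eval (n : R) = Nat.card (Γ.Coloring (Fin n)) := by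
    rw [hp n hn, Nat.card_congr (equivProperColoring Γ (Fin n))]
  have reciprocity (n : ℕ) : p.eval (-(n : R)) = (-1) ^ Nat.card V *
      Nat.card {x : (V → Fin n) × GraphOri Γ // oriAcyclic Γ x.2 ∧ weakCompat Γ x.1 x.2} := by
    have h := eval_eq_chromaticFunction Γ hcoloring (-n)
    rw [chromaticFunction_neg, ← Nat.card_congr WeakPair.equivGraphOri] at h
    push_cast at h
    exact h
  refine ⟨reciprocity, ?_⟩
  rw [← card_weakCompat_fin_one, ← reciprocity 1, Nat.cast_one]

end Reciprocity

/-- Stanley's reciprocity for graph colorings. Let `Γ` be a finite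
simple graph and `χ_Γ` its chromatic polynomial.  Then for all integers `n ≥ 1`,
`|χ_Γ(-n)|` equals the number of weakly compatible pairs `(c,σ)` consisting of an
`n`-coloring `c` and an acyclic orientation `σ` of `Γ`.  In particular, `|χ_Γ(-1)|`
equals the number of acyclic orientations of `Γ`. -/
theorem stmt_17 {V : Type*} [Fintype V] [DecidableEq V] (Γ : SimpleGraph V)
    (p : Polynomial ℚ)
    (hp : ∀ n : ℕ, 1 ≤ n →
      p.eval (n : ℚ) = Nat.card {c : V → Fin n // ∀ u v : V, Γ.Adj u v → c u ≠ c v}) :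
    (∀ n : ℕ, 1 ≤ n →
      |p.eval (-(n : ℚ))| = Nat.card {pr : (V → Fin n) × GraphOri Γ //
        oriAcyclic Γ pr.2 ∧ weakCompat Γ pr.1 pr.2}) ∧
    |p.eval (-1 : ℚ)| = Nat.card {σ : GraphOri Γ // oriAcyclic Γ σ} := by
  obtain ⟨hpairs, hacyclic⟩ := stmt_17_general Γ p hp
  exact ⟨fun n _ => by simp [hpairs, abs_mul], by simp [hacyclic, abs_mul]⟩
end
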